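/- Under the setup below, let u be a classical solution with initial datum φ ∈ C¹(closure(D)), and assume in addition that ∂_t ∇_x u and ∂_t u_y exist, are integrable over (0,T) × D, and that t ↦ ‖∇_x u(t,·,·)‖²_{L²(D)}, t ↦ ‖u_y(t,·,·)‖²_{L²(D)} are absolutely continuous on [0,T]. Then for every t ∈ (0,T], (1/4) J^α( s ↦ ‖D_s^α u(s,·,·)‖²_{L²(D)} )(t) + (1/2) ‖∇_x u(t,·,·)‖²_{L²(D)} + (1/2) ‖u_y(t,·,·)‖²_{L²(D)} ≤ (1/2) ‖∇_x φ‖²_{L²(D)} + (1/2) ‖φ_y‖²_{L²(D)} + J^α( s ↦ ‖g(s,·,·,0)‖²_{L²(D)} + ℓ₀² ‖u(s,·,·)‖²_{L²(D)} )(t) + 3 f_M² · J^α( s ↦ ‖a(s,·)‖²_{L²(G)} + 2‖ω‖² ( ‖g(s,·,·,0)‖²_{L²(D)} + ℓ₀² ‖u(s,·,·)‖²_{L²(D)} ) + ‖ω′‖² ‖u_y(s,·,·)‖²_{L²(D)} )(t). -/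

import Mathlib

/-!
The estimate comes from testing the equation, at almost every time `s`, with `D^α u(s)` in
`L²(D)`, and then applying `J^α`.

*Elliptic term.*  Integration by parts (`integral_gradDot`; `u(s)` has compact support in `D`)
and an Alikhanov-type inequality give `½ D^α E(s) ≤ -(Δu(s), D^α u(s))`, where
`E = ‖∇_x u‖² + ‖u_y‖²` (`half_caputo_energy_le`).  For frozen `s`, expanding
`0 ≤ ‖∇u(s) - ∇u(r)‖²` and moving the gradients of the cross term onto `u(s)` shows that the tail
integrals over `(r, s)` of `τ ↦ -2 (Δu(s), ∂_t u(τ)) - E'(τ)` are nonnegative.  The weight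
`(s - τ)^(-α)` is increasing in `τ`, so the weighted integral is a superposition of such tails
and hence nonnegative (`weighted_integral_nonneg`).

*Right-hand side.*  The bound on `f` cancels the denominator of `h`, and Cauchy–Schwarz in `y`
bounds `‖f h‖²` by `3 f_M²` times the squared norms of the data (`source_estimate`).  Young's
inequality absorbs the factor `D^α u` on the right (`testing_estimate`).

*Integration in time.*  `J^α D^α E = E(t) - E(0)` by Fubini and the Beta integral
(`rlInt_caputo`), which yields the claim (`rlInt_estimate`).  All singular integrals in time
converge absolutely for almost every `s` by Tonelli (`ae_integrable_caputo`), which suffices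
under `J^α`.
-/

open MeasureTheory Real

/-- Riemann–Liouville fractional integral of order `α` (with base point `0`). -/
noncomputable def rlInt (α : ℝ) (v : ℝ → ℝ) (t : ℝ) : ℝ :=
  (1 / Real.Gamma α) * ∫ τ in (0:ℝ)..t, (t - τ) ^ (α - 1) * v τ

/-- Caputo fractional derivative of order `α ∈ (0,1)` of an absolutely continuous
function whose a.e. derivative is `v'`. -/
noncomputable def caputo (α : ℝ) (v' : ℝ → ℝ) (t : ℝ) : ℝ :=
  (1 / Real.Gamma (1 - α)) * ∫ τ in (0:ℝ)..t, (t - τ) ^ (-α) * v' τ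

/-- Two-parameter Mittag-Leffler function (real arguments). -/
noncomputable def mittagLeffler (ρ μ z : ℝ) : ℝ :=
  ∑' k : ℕ, z ^ k / Real.Gamma (ρ * k + μ)

/-- The `L²(0,π)` inner product `(p,q) = ∫_0^π p q dy`. -/
noncomputable def l2ip (p q : ℝ → ℝ) : ℝ := ∫ y in Set.Ioo (0:ℝ) π, p y * q y

/-- The squared `L²(0,π)` norm `‖p‖² = ∫_0^π p² dy`. -/
noncomputable def l2sq (p : ℝ → ℝ) : ℝ := ∫ y in Set.Ioo (0:ℝ) π, (p y) ^ 2

/-! ### Fractional kernels -/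

lemma beta_kernel_integral {α t τ : ℝ} (hα : 0 < α) (hα1 : α < 1) (hτ : τ < t) :
    ∫ s in τ..t, (t - s) ^ (α - 1) * (s - τ) ^ (-α) = Real.Gamma α * Real.Gamma (1 - α) := by
  have ha : 0 < t - τ := by linarith
  have h1 := Complex.betaIntegral_scaled ((1 - α : ℝ) : ℂ) (α : ℂ) ha
  have h2 := Complex.Gamma_mul_Gamma_eq_betaIntegral (s := ((1 - α : ℝ) : ℂ)) (t := (α : ℂ))
    (by simpa using hα1) (by simpa using hα)
  have e1 : ((1 - α : ℝ) : ℂ) + α = 1 := by push_cast; ring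
  rw [e1, Complex.Gamma_one, one_mul] at h2
  rw [e1, sub_self, Complex.cpow_zero, one_mul, ← h2, Complex.Gamma_ofReal, Complex.Gamma_ofReal]
    at h1
  have h3 : ∫ x in (0:ℝ)..(t - τ), x ^ (-α) * (t - τ - x) ^ (α - 1)
      = Real.Gamma (1 - α) * Real.Gamma α := by
    apply Complex.ofReal_injective
    rw [← intervalIntegral.integral_ofReal, Complex.ofReal_mul, ← h1]
    apply intervalIntegral.integral_congr
    intro x hx
    rw [Set.uIcc_of_le ha.le] at hx
    simp only
    rw [Complex.ofReal_mul, Complex.ofReal_cpow hx.1, Complex.ofReal_cpow (by linarith [hx.2])]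
    push_cast
    congr 2
    ring
  have h4 := intervalIntegral.integral_comp_sub_right
    (fun x => x ^ (-α) * (t - τ - x) ^ (α - 1)) τ (a := τ) (b := t)
  rw [sub_self, h3] at h4
  rw [mul_comm (Real.Gamma α), ← h4]
  congr 1
  ext s
  rw [mul_comm]
  congr 2
  ring

/-- Tonelli for a nonnegative kernel acting on the second variable: weighting `q` by the
marginal of the kernel and integrating suffices for joint integrability. -/
lemma integrable_kernel_mul {μ ν : Measure ℝ} [SFinite μ] [SFinite ν] {κ : ℝ × ℝ → ℝ} {q : ℝ → ℝ}
    (hκm : Measurable κ) (hκ : ∀ p, 0 ≤ κ p) (hq : AEStronglyMeasurable q ν)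
    (h : ∀ᵐ τ ∂ν, Integrable (fun r => κ (r, τ)) μ)
    (hc : Integrable (fun τ => (∫ r, κ (r, τ) ∂μ) * q τ) ν) :
    Integrable (fun p : ℝ × ℝ => κ p * q p.2) (μ.prod ν) := by
  have hm : AEStronglyMeasurable (fun p : ℝ × ℝ => κ p * q p.2) (μ.prod ν) :=
    hκm.aestronglyMeasurable.mul hq.comp_snd
  rw [integrable_prod_iff' hm]
  refine ⟨h.mono fun τ hτ => hτ.mul_const (q τ), ?_⟩
  refine hc.norm.congr (Filter.Eventually.of_forall fun τ => ?_)
  simp only [norm_mul, Real.norm_of_nonneg (hκ _)]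
  rw [integral_mul_const, Real.norm_of_nonneg (integral_nonneg fun _ => hκ _)]

/-- The kernel `(t - s)^(α-1) (s - τ)^(-α)` on the triangle `0 < τ < s < t`, as a function of
`(s, τ)`. -/
noncomputable def triKernel (α t : ℝ) (p : ℝ × ℝ) : ℝ :=
  {p : ℝ × ℝ | p.2 < p.1 ∧ p.1 < t}.indicator
    (fun p => (t - p.1) ^ (α - 1) * (p.1 - p.2) ^ (-α)) p

lemma triKernel_nonneg (α t : ℝ) (p : ℝ × ℝ) : 0 ≤ triKernel α t p := by
  refine Set.indicator_nonneg (fun p hp => ?_) p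
  have h1 : 0 ≤ t - p.1 := by linarith [hp.2]
  have h2 : 0 ≤ p.1 - p.2 := by linarith [hp.1]
  positivity

lemma measurable_triKernel (α t : ℝ) : Measurable (triKernel α t) := by
  apply Measurable.indicator
  · fun_prop
  · exact (measurableSet_lt measurable_snd measurable_fst).inter
      (measurableSet_lt measurable_fst measurable_const)

lemma triKernel_slice {α t τ : ℝ} (hα : 0 < α) (hα1 : α < 1) (h0 : 0 ≤ τ) (hτ : τ < t) :
    Integrable (fun s => triKernel α t (s, τ)) (volume.restrict (Set.Ioc 0 t)) ∧
    ∫ s in Set.Ioc 0 t, triKernel α t (s, τ) = Real.Gamma α * Real.Gamma (1 - α) := by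
  have hk : (fun s => triKernel α t (s, τ)) =
      (Set.Ioo τ t).indicator (fun s => (t - s) ^ (α - 1) * (s - τ) ^ (-α)) := by
    ext s; simp only [triKernel, Set.indicator]; rfl
  have hb := beta_kernel_integral hα hα1 hτ
  have hpos : 0 < Real.Gamma α * Real.Gamma (1 - α) :=
    mul_pos (Real.Gamma_pos_of_pos hα) (Real.Gamma_pos_of_pos (by linarith))
  have hi : IntervalIntegrable (fun s => (t - s) ^ (α - 1) * (s - τ) ^ (-α)) volume τ t := by
    by_contra hcon
    rw [intervalIntegral.integral_undef hcon] at hb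
    linarith
  have hsub : Set.Ioo τ t ⊆ Set.Ioc 0 t := fun s hs => ⟨by linarith [hs.1], hs.2.le⟩
  rw [hk]
  constructor
  · rw [integrable_indicator_iff measurableSet_Ioo, IntegrableOn,
      Measure.restrict_restrict measurableSet_Ioo, Set.inter_eq_left.2 hsub]
    exact (intervalIntegrable_iff_integrableOn_Ioo_of_le hτ.le).1 hi
  · rw [integral_indicator measurableSet_Ioo, Measure.restrict_restrict measurableSet_Ioo,
      Set.inter_eq_left.2 hsub, ← integral_Ioc_eq_integral_Ioo,
      ← intervalIntegral.integral_of_le hτ.le, hb]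

lemma triKernel_mul_integrable {α t : ℝ} (hα : 0 < α) (hα1 : α < 1)
    {w : ℝ → ℝ} (hw : IntegrableOn w (Set.Ioc 0 t)) :
    Integrable (fun p : ℝ × ℝ => triKernel α t p * w p.2)
      ((volume.restrict (Set.Ioc 0 t)).prod (volume.restrict (Set.Ioc 0 t))) := by
  have hae : ∀ᵐ τ ∂(volume.restrict (Set.Ioc 0 t)), 0 ≤ τ ∧ τ < t := by
    rw [← restrict_Ioo_eq_restrict_Ioc]
    filter_upwards [ae_restrict_mem measurableSet_Ioo] with τ hτ
    exact ⟨hτ.1.le, hτ.2⟩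
  refine integrable_kernel_mul (measurable_triKernel α t) (triKernel_nonneg α t)
    hw.aestronglyMeasurable ?_ ?_
  · filter_upwards [hae] with τ hτ
    exact (triKernel_slice hα hα1 hτ.1 hτ.2).1
  · refine (hw.const_mul (Real.Gamma α * Real.Gamma (1 - α))).congr ?_
    filter_upwards [hae] with τ hτ
    rw [(triKernel_slice hα hα1 hτ.1 hτ.2).2]

lemma triKernel_slice_left {α t s : ℝ} (hs : s < t) (w : ℝ → ℝ) :
    (fun τ => triKernel α t (s, τ) * w τ) =
      (Set.Iio s).indicator (fun τ => (t - s) ^ (α - 1) * ((s - τ) ^ (-α) * w τ)) := by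
  ext τ
  simp only [triKernel, Set.indicator, Set.mem_ofPred_eq, hs, and_true, Set.mem_Iio]
  split_ifs <;> ring

lemma integral_triKernel_left {α t s : ℝ} (hs : s < t) (h0 : 0 < s) (w : ℝ → ℝ) :
    ∫ τ in Set.Ioc 0 t, triKernel α t (s, τ) * w τ
      = (t - s) ^ (α - 1) * ∫ τ in (0:ℝ)..s, (s - τ) ^ (-α) * w τ := by
  have hint : Set.Iio s ∩ Set.Ioc 0 t = Set.Ioo 0 s := by
    ext x; simp only [Set.mem_inter_iff, Set.mem_Iio, Set.mem_Ioc, Set.mem_Ioo]; grind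
  rw [triKernel_slice_left hs, integral_indicator measurableSet_Iio,
    Measure.restrict_restrict measurableSet_Iio, hint, integral_const_mul,
    intervalIntegral.integral_of_le h0.le, integral_Ioc_eq_integral_Ioo]

/-- For `w ∈ L¹(0,t)` the singular integral defining the Caputo derivative converges absolutely
at almost every time. -/
lemma ae_integrable_caputo {α t : ℝ} (hα : 0 < α) (hα1 : α < 1)
    {w : ℝ → ℝ} (hw : IntegrableOn w (Set.Ioc 0 t)) :
    ∀ᵐ s ∂(volume.restrict (Set.Ioo 0 t)),
      IntegrableOn (fun τ => (s - τ) ^ (-α) * w τ) (Set.Ioo 0 s) := by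
  have h := (triKernel_mul_integrable hα hα1 hw).prod_right_ae
  rw [← restrict_Ioo_eq_restrict_Ioc] at h
  filter_upwards [h, ae_restrict_mem measurableSet_Ioo] with s hs hs'
  have hint : Set.Iio s ∩ Set.Ioo 0 t = Set.Ioo 0 s := by
    ext x; have := hs'.2; simp only [Set.mem_inter_iff, Set.mem_Iio, Set.mem_Ioo]; grind
  rw [triKernel_slice_left hs'.2, integrable_indicator_iff measurableSet_Iio, IntegrableOn,
    Measure.restrict_restrict measurableSet_Iio, hint] at hs
  have hc : (t - s) ^ (α - 1) ≠ 0 := (Real.rpow_pos_of_pos (by linarith [hs'.2]) _).ne'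
  refine (hs.const_mul ((t - s) ^ (α - 1))⁻¹).congr (Filter.Eventually.of_forall fun τ => ?_)
  simp only
  rw [inv_mul_cancel_left₀ hc]

lemma caputo_weighted_integrable {α t : ℝ} (ht : 0 ≤ t) (hα : 0 < α) (hα1 : α < 1)
    {w : ℝ → ℝ} (hw : IntegrableOn w (Set.Ioc 0 t)) :
    IntervalIntegrable (fun s => (t - s) ^ (α - 1) * caputo α w s) volume 0 t := by
  rw [intervalIntegrable_iff_integrableOn_Ioo_of_le ht]
  have h := (triKernel_mul_integrable hα hα1 hw).integral_prod_left
  rw [← restrict_Ioo_eq_restrict_Ioc] at h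
  refine (h.const_mul (1 / Real.Gamma (1 - α))).congr ?_
  filter_upwards [ae_restrict_mem measurableSet_Ioo] with s hs
  rw [restrict_Ioo_eq_restrict_Ioc, integral_triKernel_left hs.2 hs.1, caputo]
  ring

/-- The Riemann–Liouville integral inverts the Caputo derivative: `J^α D^α W = W(t) - W(0)`. -/
lemma rlInt_caputo {α t : ℝ} (ht : 0 ≤ t) (hα : 0 < α) (hα1 : α < 1)
    {w : ℝ → ℝ} (hw : IntegrableOn w (Set.Ioc 0 t)) :
    rlInt α (caputo α w) t = ∫ s in (0:ℝ)..t, w s := by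
  have h := integral_integral_swap (f := fun s τ => triKernel α t (s, τ) * w τ)
    (triKernel_mul_integrable hα hα1 hw)
  have hl : ∫ s in Set.Ioc 0 t, ∫ τ in Set.Ioc 0 t, triKernel α t (s, τ) * w τ
      = Real.Gamma (1 - α) * ∫ s in (0:ℝ)..t, (t - s) ^ (α - 1) * caputo α w s := by
    rw [intervalIntegral.integral_of_le ht, ← integral_const_mul, integral_Ioc_eq_integral_Ioo,
      integral_Ioc_eq_integral_Ioo]
    refine setIntegral_congr_fun measurableSet_Ioo fun s hs => ?_
    rw [integral_triKernel_left hs.2 hs.1, caputo]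
    have := (Real.Gamma_pos_of_pos (show 0 < 1 - α by linarith)).ne'
    field_simp
  have hr : ∫ τ in Set.Ioc 0 t, ∫ s in Set.Ioc 0 t, triKernel α t (s, τ) * w τ
      = Real.Gamma α * Real.Gamma (1 - α) * ∫ s in (0:ℝ)..t, w s := by
    rw [intervalIntegral.integral_of_le ht, ← integral_const_mul, integral_Ioc_eq_integral_Ioo
      (f := fun τ => _ * w τ), integral_Ioc_eq_integral_Ioo]
    refine setIntegral_congr_fun measurableSet_Ioo fun τ hτ => ?_
    rw [integral_mul_const, (triKernel_slice hα hα1 hτ.1.le hτ.2).2]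
  rw [hl, hr] at h
  have h1 := (Real.Gamma_pos_of_pos (show 0 < 1 - α by linarith)).ne'
  have h2 := (Real.Gamma_pos_of_pos hα).ne'
  rw [rlInt]
  have h3 : ∫ s in (0:ℝ)..t, (t - s) ^ (α - 1) * caputo α w s
      = Real.Gamma α * ∫ s in (0:ℝ)..t, w s := by
    apply mul_left_cancel₀ h1
    rw [h]; ring
  rw [h3]
  field_simp

/-- Positivity behind Alikhanov's inequality: if every tail integral of `q` over `(r,s)` is
nonnegative, so is its integral against the increasing weight `(s - τ)^(-α)`.  Writing
`(s - τ)^(-α) = s^(-α) + ∫_0^τ α (s - r)^(-α-1) dr` turns the weighted integral into a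
superposition of tail integrals. -/
lemma weighted_integral_nonneg {α s : ℝ} (hα : 0 < α) (hs : 0 < s) {q : ℝ → ℝ}
    (hq : IntegrableOn q (Set.Ioo 0 s))
    (hqw : IntegrableOn (fun τ => (s - τ) ^ (-α) * q τ) (Set.Ioo 0 s))
    (htail : ∀ r ∈ Set.Ico 0 s, 0 ≤ ∫ τ in r..s, q τ) :
    0 ≤ ∫ τ in (0:ℝ)..s, (s - τ) ^ (-α) * q τ := by
  let κ : ℝ × ℝ → ℝ := fun p =>
    {p : ℝ × ℝ | p.1 < p.2 ∧ p.1 < s}.indicator (fun p => α * (s - p.1) ^ (-α - 1)) p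
  have hκm : Measurable κ := by
    apply Measurable.indicator
    · fun_prop
    · exact (measurableSet_lt measurable_fst measurable_snd).inter
        (measurableSet_lt measurable_fst measurable_const)
  have hκ0 : ∀ p, 0 ≤ κ p := fun p => by
    refine Set.indicator_nonneg (fun p hp => ?_) p
    have h1 : 0 ≤ s - p.1 := by linarith [hp.2]
    positivity
  have hcont : ∀ τ ∈ Set.Ioo 0 s,
      ContinuousOn (fun r => α * (s - r) ^ (-α - 1)) (Set.uIcc 0 τ) := by
    intro τ hτ
    rw [Set.uIcc_of_le hτ.1.le]
    refine continuousOn_const.mul (ContinuousOn.rpow_const (by fun_prop) fun r hr => Or.inl ?_)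
    have := hr.2; have := hτ.2
    exact (by linarith : 0 < s - r).ne'
  have hκτ : ∀ τ ∈ Set.Ioo 0 s, (fun r => κ (r, τ)) =
      (Set.Iio τ).indicator (fun r => α * (s - r) ^ (-α - 1)) := by
    intro τ hτ
    ext r
    have := hτ.2
    simp only [κ, Set.indicator, Set.mem_ofPred_eq, Set.mem_Iio]
    congr 1
    grind
  have hset : ∀ τ ∈ Set.Ioo 0 s, Set.Iio τ ∩ Set.Ioo 0 s = Set.Ioo 0 τ := by
    intro τ hτ
    ext x; have := hτ.2; simp only [Set.mem_inter_iff, Set.mem_Iio, Set.mem_Ioo]; grind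
  have hsl : ∀ τ ∈ Set.Ioo 0 s, Integrable (fun r => κ (r, τ)) (volume.restrict (Set.Ioo 0 s)) := by
    intro τ hτ
    rw [hκτ τ hτ, integrable_indicator_iff measurableSet_Iio, IntegrableOn,
      Measure.restrict_restrict measurableSet_Iio, hset τ hτ]
    exact (intervalIntegrable_iff_integrableOn_Ioo_of_le hτ.1.le).1
      (hcont τ hτ).intervalIntegrable
  have hval : ∀ τ ∈ Set.Ioo 0 s,
      ∫ r in Set.Ioo 0 s, κ (r, τ) = (s - τ) ^ (-α) - s ^ (-α) := by
    intro τ hτ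
    rw [hκτ τ hτ, integral_indicator measurableSet_Iio,
      Measure.restrict_restrict measurableSet_Iio, hset τ hτ, ← integral_Ioc_eq_integral_Ioo,
      ← intervalIntegral.integral_of_le hτ.1.le]
    rw [intervalIntegral.integral_eq_sub_of_hasDerivAt (f := fun r => (s - r) ^ (-α))]
    · simp
    · intro r hr
      rw [Set.uIcc_of_le hτ.1.le] at hr
      have h0 : s - r ≠ 0 := by have := hr.2; have := hτ.2; exact (by linarith : 0 < s - r).ne'
      have := ((hasDerivAt_id r).const_sub s).rpow_const (p := -α) (Or.inl h0)
      simpa using this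
    · exact (hcont τ hτ).intervalIntegrable
  have hdiff : IntegrableOn (fun τ => ((s - τ) ^ (-α) - s ^ (-α)) * q τ) (Set.Ioo 0 s) := by
    simp only [sub_mul]
    exact hqw.sub (hq.const_mul _)
  have hK : Integrable (fun p : ℝ × ℝ => κ p * q p.2)
      ((volume.restrict (Set.Ioo 0 s)).prod (volume.restrict (Set.Ioo 0 s))) := by
    refine integrable_kernel_mul hκm hκ0 hq.aestronglyMeasurable ?_ ?_
    · filter_upwards [ae_restrict_mem measurableSet_Ioo] with τ hτ using hsl τ hτ
    · refine Integrable.congr hdiff ?_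
      filter_upwards [ae_restrict_mem measurableSet_Ioo] with τ hτ
      rw [hval τ hτ]
  have hsw := integral_integral_swap (f := fun r τ => κ (r, τ) * q τ) hK
  have hR : ∫ τ in Set.Ioo 0 s, ∫ r in Set.Ioo 0 s, κ (r, τ) * q τ
      = (∫ τ in Set.Ioo 0 s, (s - τ) ^ (-α) * q τ) - s ^ (-α) * ∫ τ in Set.Ioo 0 s, q τ := by
    rw [← integral_const_mul, ← integral_sub hqw (hq.const_mul _)]
    refine setIntegral_congr_fun measurableSet_Ioo fun τ hτ => ?_
    rw [integral_mul_const, hval τ hτ]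
    ring
  have hL : 0 ≤ ∫ r in Set.Ioo 0 s, ∫ τ in Set.Ioo 0 s, κ (r, τ) * q τ := by
    refine setIntegral_nonneg measurableSet_Ioo fun r hr => ?_
    have hfun : (fun τ => κ (r, τ) * q τ) =
        (Set.Ioi r).indicator (fun τ => α * (s - r) ^ (-α - 1) * q τ) := by
      ext τ
      have := hr.2
      simp only [κ, Set.indicator, Set.mem_ofPred_eq, Set.mem_Ioi, this, and_true]
      split_ifs <;> simp
    have hset' : Set.Ioi r ∩ Set.Ioo 0 s = Set.Ioo r s := by
      ext x; have := hr.1; simp only [Set.mem_inter_iff, Set.mem_Ioi, Set.mem_Ioo]; grind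
    rw [hfun, integral_indicator measurableSet_Ioi, Measure.restrict_restrict measurableSet_Ioi,
      hset', integral_const_mul, ← integral_Ioc_eq_integral_Ioo,
      ← intervalIntegral.integral_of_le hr.2.le]
    have h1 : 0 ≤ s - r := by linarith [hr.2]
    have h2 := htail r ⟨hr.1.le, hr.2⟩
    positivity
  have h0 := htail 0 ⟨le_rfl, hs⟩
  rw [intervalIntegral.integral_of_le hs.le, integral_Ioc_eq_integral_Ioo] at h0 ⊢
  rw [hsw, hR] at hL
  have h1 : 0 ≤ s ^ (-α) * ∫ τ in Set.Ioo 0 s, q τ := mul_nonneg (by positivity) h0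
  linarith

/-! ### Spatial calculus for compactly supported functions -/

section Spatial

variable {n : ℕ}

/-- The unit vector of `ℝⁿ × ℝ` in the direction `x_i`. -/
noncomputable def dirX (i : Fin n) : (Fin n → ℝ) × ℝ := (Pi.single i 1, 0)

/-- The unit vector of `ℝⁿ × ℝ` in the direction `y`. -/
noncomputable def dirY : (Fin n → ℝ) × ℝ := (0, 1)

/-- The Laplacian `Δ_x + ∂_y²` on `ℝⁿ × ℝ`. -/
noncomputable def lap (v : (Fin n → ℝ) × ℝ → ℝ) (p : (Fin n → ℝ) × ℝ) : ℝ :=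
  ∑ i, fderiv ℝ (fun q => fderiv ℝ v q (dirX i)) p (dirX i)
    + fderiv ℝ (fun q => fderiv ℝ v q dirY) p dirY

/-- The product `∇v · ∇w` of the full gradients on `ℝⁿ × ℝ`. -/
noncomputable def gradDot (v w : (Fin n → ℝ) × ℝ → ℝ) (p : (Fin n → ℝ) × ℝ) : ℝ :=
  ∑ i, fderiv ℝ v p (dirX i) * fderiv ℝ w p (dirX i) + fderiv ℝ v p dirY * fderiv ℝ w p dirY

lemma contDiff_of_compact_support {G : Set (Fin n → ℝ)} (hG : IsOpen G)
    {K : Set ((Fin n → ℝ) × ℝ)} (hK : IsCompact K) (hKD : K ⊆ G ×ˢ Set.Ioo 0 π)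
    {v : (Fin n → ℝ) × ℝ → ℝ} (hv : ContDiffOn ℝ 2 v (closure G ×ˢ Set.Icc 0 π))
    (h0 : ∀ p, p ∉ K → v p = 0) : ContDiff ℝ 2 v := by
  rw [contDiff_iff_contDiffAt]
  intro p
  by_cases hp : p ∈ K
  · refine hv.contDiffAt (Filter.mem_of_superset ((hG.prod isOpen_Ioo).mem_nhds (hKD hp)) ?_)
    exact Set.prod_mono subset_closure Set.Ioo_subset_Icc_self
  · have : v =ᶠ[nhds p] fun _ => 0 := by
      filter_upwards [hK.isClosed.isOpen_compl.mem_nhds hp] with q hq using h0 q hq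
    exact contDiffAt_const.congr_of_eventuallyEq this

lemma deriv_comp_update {v : (Fin n → ℝ) × ℝ → ℝ} (hv : Differentiable ℝ v) (x : Fin n → ℝ) (y : ℝ)
    (i : Fin n) (r : ℝ) :
    deriv (fun r => v (Function.update x i r, y)) r
      = fderiv ℝ v (Function.update x i r, y) (dirX i) := by
  have h1 : HasDerivAt (fun r => (Function.update x i r, y)) (dirX i) r :=
    (hasDerivAt_update x i r).prodMk (hasDerivAt_const r y)
  exact ((hv _).hasFDerivAt.comp_hasDerivAt r h1).deriv

lemma deriv_snd {v : (Fin n → ℝ) × ℝ → ℝ} (hv : Differentiable ℝ v) (x : Fin n → ℝ) (y : ℝ) :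
    deriv (fun z => v (x, z)) y = fderiv ℝ v (x, y) dirY := by
  have h1 : HasDerivAt (fun z => (x, z)) (dirY : (Fin n → ℝ) × ℝ) y :=
    (hasDerivAt_const y x).prodMk (hasDerivAt_id y)
  exact ((hv _).hasFDerivAt.comp_hasDerivAt y h1).deriv

lemma contDiff_dir {v : (Fin n → ℝ) × ℝ → ℝ} (hv : ContDiff ℝ 2 v) (d : (Fin n → ℝ) × ℝ) :
    ContDiff ℝ 1 (fun q => fderiv ℝ v q d) :=
  (hv.fderiv_right (m := 1) (by norm_num)).clm_apply contDiff_const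

lemma hasCompactSupport_dir {v : (Fin n → ℝ) × ℝ → ℝ} (hv : HasCompactSupport v)
    (d : (Fin n → ℝ) × ℝ) : HasCompactSupport (fun q => fderiv ℝ v q d) :=
  (hv.fderiv ℝ).comp_left (g := fun L : ((Fin n → ℝ) × ℝ) →L[ℝ] ℝ => L d) (by simp)

lemma iteratedDeriv_update {v : (Fin n → ℝ) × ℝ → ℝ} (hv : ContDiff ℝ 2 v) (x : Fin n → ℝ)
    (y : ℝ) (i : Fin n) :
    iteratedDeriv 2 (fun r => v (Function.update x i r, y)) (x i)
      = fderiv ℝ (fun q => fderiv ℝ v q (dirX i)) (x, y) (dirX i) := by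
  rw [iteratedDeriv_succ, iteratedDeriv_one]
  have : deriv (fun r => v (Function.update x i r, y))
      = fun r => (fun q => fderiv ℝ v q (dirX i)) (Function.update x i r, y) :=
    funext fun r => deriv_comp_update (hv.differentiable (by norm_num)) x y i r
  rw [this, deriv_comp_update ((contDiff_dir hv _).differentiable (by norm_num)) x y i,
    Function.update_eq_self]

lemma iteratedDeriv_snd {v : (Fin n → ℝ) × ℝ → ℝ} (hv : ContDiff ℝ 2 v) (x : Fin n → ℝ) (y : ℝ) :
    iteratedDeriv 2 (fun z => v (x, z)) y
      = fderiv ℝ (fun q => fderiv ℝ v q dirY) (x, y) dirY := by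
  rw [iteratedDeriv_succ, iteratedDeriv_one]
  have : deriv (fun z => v (x, z)) = fun z => (fun q => fderiv ℝ v q dirY) (x, z) :=
    funext fun r => deriv_snd (hv.differentiable (by norm_num)) x r
  rw [this, deriv_snd ((contDiff_dir hv _).differentiable (by norm_num)) x y]

lemma continuous_lap {v : (Fin n → ℝ) × ℝ → ℝ} (hv : ContDiff ℝ 2 v) : Continuous (lap v) := by
  have h : ∀ d e : (Fin n → ℝ) × ℝ, Continuous (fun p => fderiv ℝ (fun q => fderiv ℝ v q d) p e) :=
    fun d e => ((contDiff_dir hv d).continuous_fderiv (by norm_num)).clm_apply continuous_const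
  exact (continuous_finsetSum _ fun i _ => h _ _).add (h _ _)

lemma hasCompactSupport_lap {v : (Fin n → ℝ) × ℝ → ℝ} (hv : HasCompactSupport v) :
    HasCompactSupport (lap v) := by
  refine HasCompactSupport.add ?_ (hasCompactSupport_dir (hasCompactSupport_dir hv _) _)
  have h : ∀ s : Finset (Fin n), HasCompactSupport
      (fun p => ∑ i ∈ s, fderiv ℝ (fun q => fderiv ℝ v q (dirX i)) p (dirX i)) := by
    intro s
    induction s using Finset.induction_on with
    | empty =>
      simp only [Finset.sum_empty]
      exact HasCompactSupport.zero
    | insert a s ha ih =>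
      simp only [Finset.sum_insert ha]
      exact (hasCompactSupport_dir (hasCompactSupport_dir hv _) _).add ih
  exact h Finset.univ

lemma dir_mul_integrable {v w : (Fin n → ℝ) × ℝ → ℝ} (hv : ContDiff ℝ 2 v) (hw : ContDiff ℝ 2 w)
    (hvs : HasCompactSupport v) (d : (Fin n → ℝ) × ℝ) :
    Integrable (fun p => fderiv ℝ v p d * fderiv ℝ w p d) :=
  ((contDiff_dir hv d).continuous.mul (contDiff_dir hw d).continuous).integrable_of_hasCompactSupport
    (hasCompactSupport_dir hvs d).mul_right

lemma gradDot_integrable {v w : (Fin n → ℝ) × ℝ → ℝ} (hv : ContDiff ℝ 2 v) (hw : ContDiff ℝ 2 w)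
    (hvs : HasCompactSupport v) : Integrable (gradDot v w) :=
  (integrable_finsetSum _ fun _ _ => dir_mul_integrable hv hw hvs _).add
    (dir_mul_integrable hv hw hvs _)

lemma integral_gradDot {v w : (Fin n → ℝ) × ℝ → ℝ} (hv : ContDiff ℝ 2 v) (hw : ContDiff ℝ 2 w)
    (hvs : HasCompactSupport v) :
    ∫ p, gradDot v w p = - ∫ p, lap v p * w p := by
  have : (volume : Measure ((Fin n → ℝ) × ℝ)).IsAddHaarMeasure :=
    Measure.prod.instIsAddHaarMeasure _ _
  have hi : ∀ d : (Fin n → ℝ) × ℝ,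
      Integrable (fun p => fderiv ℝ (fun q => fderiv ℝ v q d) p d * w p) := fun d =>
    (((contDiff_dir hv d).continuous_fderiv (by norm_num)).clm_apply
      continuous_const |>.mul hw.continuous).integrable_of_hasCompactSupport
        (hasCompactSupport_dir (hasCompactSupport_dir hvs d) d).mul_right
  have key : ∀ d : (Fin n → ℝ) × ℝ, ∫ p, fderiv ℝ v p d * fderiv ℝ w p d
      = - ∫ p, fderiv ℝ (fun q => fderiv ℝ v q d) p d * w p := fun d =>
    integral_mul_fderiv_eq_neg_fderiv_mul_of_integrable (hi d) (dir_mul_integrable hv hw hvs d)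
      (((contDiff_dir hv d).continuous.mul hw.continuous).integrable_of_hasCompactSupport
        (hasCompactSupport_dir hvs d).mul_right)
      (fun x _ => (contDiff_dir hv d).differentiable (by norm_num) x)
      (fun x _ => hw.differentiable (by norm_num) x)
  simp only [gradDot, lap, add_mul, Finset.sum_mul]
  rw [integral_add (integrable_finsetSum _ fun _ _ => dir_mul_integrable hv hw hvs _)
    (dir_mul_integrable hv hw hvs _), integral_finsetSum _ fun _ _ => dir_mul_integrable hv hw hvs _,
    integral_add (integrable_finsetSum _ fun _ _ => hi _) (hi _),
    integral_finsetSum _ fun _ _ => hi _]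
  simp only [key, Finset.sum_neg_distrib, neg_add]

/-- Expanding `0 ≤ ‖∇v - ∇w‖²` and integrating the cross term by parts. -/
lemma energy_polarization {v w : (Fin n → ℝ) × ℝ → ℝ} (hv : ContDiff ℝ 2 v) (hw : ContDiff ℝ 2 w)
    (hvs : HasCompactSupport v) (hws : HasCompactSupport w) :
    0 ≤ (∫ p, gradDot v v p) + (∫ p, gradDot w w p) + 2 * ∫ p, lap v p * w p := by
  have hvw : Integrable (fun p => gradDot v v p + gradDot w w p) :=
    (gradDot_integrable hv hv hvs).add (gradDot_integrable hw hw hws)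
  have h : 0 ≤ ∫ p, (gradDot v v p + gradDot w w p - 2 * gradDot v w p) := by
    refine integral_nonneg fun p => ?_
    have : gradDot v v p + gradDot w w p - 2 * gradDot v w p
        = ∑ i, (fderiv ℝ v p (dirX i) - fderiv ℝ w p (dirX i)) ^ 2
          + (fderiv ℝ v p dirY - fderiv ℝ w p dirY) ^ 2 := by
      have hs : ∑ i, (fderiv ℝ v p (dirX i) - fderiv ℝ w p (dirX i)) ^ 2
          = ∑ i, fderiv ℝ v p (dirX i) * fderiv ℝ v p (dirX i)
            + ∑ i, fderiv ℝ w p (dirX i) * fderiv ℝ w p (dirX i)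
            - 2 * ∑ i, fderiv ℝ v p (dirX i) * fderiv ℝ w p (dirX i) := by
        rw [Finset.mul_sum, ← Finset.sum_add_distrib, ← Finset.sum_sub_distrib]
        exact Finset.sum_congr rfl fun i _ => by ring
      rw [hs]
      simp only [gradDot]
      ring
    rw [Pi.zero_apply, this]
    positivity
  rw [integral_sub hvw
    ((gradDot_integrable hv hw hvs).const_mul 2),
    integral_add (gradDot_integrable hv hv hvs) (gradDot_integrable hw hw hws),
    integral_const_mul, integral_gradDot hv hw hvs] at h
  linarith

/-- The two iterated Dirichlet integrals over `G × (0,π)` add up to the full Dirichlet energy. -/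
lemma energy_eq {G : Set (Fin n → ℝ)} {K : Set ((Fin n → ℝ) × ℝ)} (hK : IsCompact K)
    (hKD : K ⊆ G ×ˢ Set.Ioo 0 π)
    {v : (Fin n → ℝ) × ℝ → ℝ} (hv : ContDiff ℝ 2 v) (h0 : ∀ p, p ∉ K → v p = 0) :
    (∫ x in G, ∫ y in Set.Ioo (0:ℝ) π,
        ∑ i, (deriv (fun r => v (Function.update x i r, y)) (x i)) ^ 2)
      + (∫ x in G, ∫ y in Set.Ioo (0:ℝ) π, (deriv (fun z => v (x, z)) y) ^ 2)
      = ∫ p, gradDot v v p := by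
  have hvs : HasCompactSupport v := HasCompactSupport.intro hK h0
  have hd := hv.differentiable (by norm_num)
  have hz : ∀ p ∉ K, fderiv ℝ v p = 0 := by
    intro p hp
    have : v =ᶠ[nhds p] fun _ => 0 := by
      filter_upwards [hK.isClosed.isOpen_compl.mem_nhds hp] with q hq using h0 q hq
    rw [this.fderiv_eq]; simp
  have hx : ∀ x y i, deriv (fun r => v (Function.update x i r, y)) (x i)
      = fderiv ℝ v (x, y) (dirX i) := fun x y i => by
    rw [deriv_comp_update hd, Function.update_eq_self]
  simp only [hx, deriv_snd hd]
  have i1 : Integrable (fun p => ∑ i, (fderiv ℝ v p (dirX i)) ^ 2) := by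
    simp only [pow_two]
    exact integrable_finsetSum _ fun _ _ => dir_mul_integrable hv hv hvs _
  have i2 : Integrable (fun p => (fderiv ℝ v p dirY) ^ 2) := by
    simp only [pow_two]
    exact dir_mul_integrable hv hv hvs _
  have e1 := setIntegral_prod (μ := volume) (ν := volume)
    (fun p => ∑ i, (fderiv ℝ v p (dirX i)) ^ 2) (s := G) (t := Set.Ioo (0:ℝ) π)
    i1.integrableOn
  have e2 := setIntegral_prod (μ := volume) (ν := volume)
    (fun p => (fderiv ℝ v p dirY) ^ 2) (s := G) (t := Set.Ioo (0:ℝ) π)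
    i2.integrableOn
  rw [← e1, ← e2, setIntegral_eq_integral_of_forall_compl_eq_zero,
    setIntegral_eq_integral_of_forall_compl_eq_zero, ← Measure.volume_eq_prod, ← integral_add i1 i2]
  · simp only [gradDot, pow_two]
  · intro p hp
    simp [hz p fun h => hp (hKD h)]
  · intro p hp
    simp [hz p fun h => hp (hKD h)]

end Spatial

/-! ### Pairing the time derivative with a fixed spatial function -/

section Pairing

variable {X : Type*} [MeasurableSpace X] {ν : Measure X}

lemma bdd_mul_time_integrable {S : Set ℝ} {Ut : ℝ → X → ℝ} {ψ : X → ℝ} {c : ℝ}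
    (hψm : AEStronglyMeasurable ψ ν) (hψ : ∀ p, |ψ p| ≤ c)
    (hint : Integrable (fun q : ℝ × X => Ut q.1 q.2) ((volume.restrict S).prod ν)) :
    Integrable (fun q : ℝ × X => ψ q.2 * Ut q.1 q.2) ((volume.restrict S).prod ν) :=
  hint.bdd_mul (c := c) hψm.comp_snd (Filter.Eventually.of_forall fun q => hψ q.2)

variable [SFinite ν]

/-- Fundamental theorem of calculus for `τ ↦ ∫ ψ U(τ)`, via Fubini. -/
lemma pairing_ftc {T : ℝ} {U Ut : ℝ → X → ℝ} {ψ : X → ℝ} {c : ℝ}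
    (hψm : AEStronglyMeasurable ψ ν) (hψ : ∀ p, |ψ p| ≤ c)
    (hint : Integrable (fun q : ℝ × X => Ut q.1 q.2) ((volume.restrict (Set.Ioc 0 T)).prod ν))
    (hc : ∀ᵐ p ∂ν, ContinuousOn (fun τ => U τ p) (Set.Icc 0 T))
    (hd : ∀ᵐ p ∂ν, ∀ τ ∈ Set.Ioc 0 T, HasDerivAt (fun τ => U τ p) (Ut τ p) τ)
    (hU : ∀ τ ∈ Set.Icc 0 T, Integrable (fun p => ψ p * U τ p) ν)
    {r s : ℝ} (hr : 0 ≤ r) (hrs : r ≤ s) (hs : s ≤ T) :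
    (∫ p, ψ p * U s p ∂ν) - (∫ p, ψ p * U r p ∂ν) = ∫ τ in r..s, ∫ p, ψ p * Ut τ p ∂ν := by
  have hsub : Set.Ioc r s ⊆ Set.Ioc 0 T := Set.Ioc_subset_Ioc hr hs
  have hint' : Integrable (fun q : ℝ × X => Ut q.1 q.2) ((volume.restrict (Set.Ioc r s)).prod ν) :=
    hint.mono_measure (Measure.prod_mono (Measure.restrict_mono hsub le_rfl) le_rfl)
  rw [intervalIntegral.integral_of_le hrs,
    integral_integral_swap (f := fun τ p => ψ p * Ut τ p) (bdd_mul_time_integrable hψm hψ hint'),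
    ← integral_sub (hU s ⟨hr.trans hrs, hs⟩) (hU r ⟨hr, hrs.trans hs⟩)]
  apply integral_congr_ae
  filter_upwards [hc, hd, hint'.prod_left_ae] with p hcp hdp hip
  rw [integral_const_mul, ← intervalIntegral.integral_of_le hrs,
    intervalIntegral.integral_eq_sub_of_hasDerivAt_of_le hrs (f := fun τ => U τ p)
      (hcp.mono (Set.Icc_subset_Icc hr hs))
      (fun τ hτ => hdp τ (hsub (Set.Ioo_subset_Ioc_self hτ)))
      ((intervalIntegrable_iff_integrableOn_Ioc_of_le hrs).2 hip)]
  ring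

lemma weighted_time_integrable {α s : ℝ} {Ut : ℝ → X → ℝ}
    (hint : Integrable (fun q : ℝ × X => Ut q.1 q.2) ((volume.restrict (Set.Ioo 0 s)).prod ν))
    (hw : IntegrableOn (fun τ => (s - τ) ^ (-α) * ∫ p, ‖Ut τ p‖ ∂ν) (Set.Ioo 0 s)) :
    Integrable (fun q : ℝ × X => (s - q.1) ^ (-α) * Ut q.1 q.2)
      ((volume.restrict (Set.Ioo 0 s)).prod ν) := by
  have hk : Measurable (fun q : ℝ × X => (s - q.1) ^ (-α)) := by fun_prop
  have hm : AEStronglyMeasurable (fun q : ℝ × X => (s - q.1) ^ (-α) * Ut q.1 q.2)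
      ((volume.restrict (Set.Ioo 0 s)).prod ν) := hk.aestronglyMeasurable.mul hint.1
  rw [integrable_prod_iff hm]
  refine ⟨hint.prod_right_ae.mono fun τ hτ => hτ.const_mul ((s - τ) ^ (-α)), ?_⟩
  refine Integrable.congr hw ?_
  filter_upwards [ae_restrict_mem measurableSet_Ioo] with τ hτ
  have h0 : 0 ≤ s - τ := by linarith [hτ.2]
  simp only [norm_mul, Real.norm_of_nonneg (Real.rpow_nonneg h0 (-α))]
  rw [integral_const_mul]

lemma caputo_eq_Ioo {α s : ℝ} (hs : 0 ≤ s) (w : ℝ → ℝ) :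
    caputo α w s = (1 / Real.Gamma (1 - α)) * ∫ τ in Set.Ioo 0 s, (s - τ) ^ (-α) * w τ := by
  rw [caputo, intervalIntegral.integral_of_le hs, integral_Ioc_eq_integral_Ioo]

/-- The Caputo derivative commutes with pairing against a bounded function. -/
lemma integral_mul_caputo {α s : ℝ} (hs : 0 ≤ s) {Ut : ℝ → X → ℝ} {ψ : X → ℝ} {c : ℝ}
    (hψm : AEStronglyMeasurable ψ ν) (hψ : ∀ p, |ψ p| ≤ c)
    (hint : Integrable (fun q : ℝ × X => (s - q.1) ^ (-α) * Ut q.1 q.2)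
      ((volume.restrict (Set.Ioo 0 s)).prod ν)) :
    Integrable (fun p => caputo α (fun τ => Ut τ p) s) ν ∧
    IntegrableOn (fun τ => (s - τ) ^ (-α) * ∫ p, ψ p * Ut τ p ∂ν) (Set.Ioo 0 s) ∧
    ∫ p, ψ p * caputo α (fun τ => Ut τ p) s ∂ν = caputo α (fun τ => ∫ p, ψ p * Ut τ p ∂ν) s := by
  have hψi := bdd_mul_time_integrable (Ut := fun τ p => (s - τ) ^ (-α) * Ut τ p) hψm hψ hint
  have e : ∀ τ, ∫ p, ψ p * ((s - τ) ^ (-α) * Ut τ p) ∂ν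
      = (s - τ) ^ (-α) * ∫ p, ψ p * Ut τ p ∂ν := fun τ => by
    rw [← integral_const_mul]
    congr 1; ext p; ring
  refine ⟨?_, ?_, ?_⟩
  · simp only [caputo_eq_Ioo hs]
    exact hint.integral_prod_right.const_mul _
  · have := hψi.integral_prod_left
    simp only [e] at this
    exact this
  · have := integral_integral_swap
      (f := fun τ p => ψ p * ((s - τ) ^ (-α) * Ut τ p)) hψi
    simp only [e] at this
    simp only [caputo_eq_Ioo hs]
    rw [this, ← integral_const_mul]
    congr 1; ext p
    rw [integral_const_mul]
    ring

end Pairing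

/-! ### Cauchy–Schwarz and continuity of parametric integrals -/

lemma sq_integral_mul_le {X : Type*} [MeasurableSpace X] {μ : Measure X} {p q : X → ℝ}
    (hp : Integrable (fun y => p y ^ 2) μ) (hq : Integrable (fun y => q y ^ 2) μ)
    (hpq : Integrable (fun y => p y * q y) μ) :
    (∫ y, p y * q y ∂μ) ^ 2 ≤ (∫ y, p y ^ 2 ∂μ) * ∫ y, q y ^ 2 ∂μ := by
  have h : ∀ c : ℝ, 0 ≤ (∫ y, q y ^ 2 ∂μ) * (c * c) + (2 * ∫ y, p y * q y ∂μ) * c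
      + ∫ y, p y ^ 2 ∂μ := by
    intro c
    have h1 : ∫ y, (p y + c * q y) ^ 2 ∂μ
        = ∫ y, (p y ^ 2 + (2 * c) * (p y * q y) + (c * c) * q y ^ 2) ∂μ := by
      congr 1; ext y; ring
    have h2 : Integrable (fun y => p y ^ 2 + (2 * c) * (p y * q y)) μ := hp.add (hpq.const_mul _)
    rw [integral_add h2 (hq.const_mul _), integral_add hp (hpq.const_mul _), integral_const_mul,
      integral_const_mul] at h1
    have h3 : 0 ≤ ∫ y, (p y + c * q y) ^ 2 ∂μ := integral_nonneg fun y => sq_nonneg _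
    rw [h1] at h3
    linarith
  have := discrim_le_zero h
  rw [discrim] at this
  linarith

lemma continuousOn_integral_param {X : Type*} [TopologicalSpace X] [T2Space X] [MeasurableSpace X]
    [BorelSpace X] [SecondCountableTopology X]
    {μ : Measure X} [IsFiniteMeasureOnCompacts μ] {I : Set ℝ} (hI : IsCompact I)
    {C D : Set X} (hC : IsCompact C) (hD : MeasurableSet D) (hDC : D ⊆ C) {F : ℝ → X → ℝ}
    (hF : ContinuousOn (fun q : ℝ × X => F q.1 q.2) (I ×ˢ C)) :
    ContinuousOn (fun s => ∫ p in D, F s p ∂μ) I := by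
  obtain ⟨c, hc⟩ := (hI.prod hC).exists_bound_of_continuousOn hF
  have hfin : μ D < ⊤ := (measure_mono hDC).trans_lt hC.measure_lt_top
  refine MeasureTheory.continuousOn_of_dominated (bound := fun _ => c) ?_ ?_ ?_ ?_
  · intro s hs
    refine ContinuousOn.aestronglyMeasurable ?_ hD
    exact hF.comp (f := fun p => (s, p)) (by fun_prop) fun p hp => ⟨hs, hDC hp⟩
  · intro s hs
    filter_upwards [ae_restrict_mem hD] with p hp using hc (s, p) ⟨hs, hDC hp⟩
  · exact integrableOn_const hfin.ne
  · filter_upwards [ae_restrict_mem hD] with p hp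
    exact hF.comp (f := fun s => (s, p)) (by fun_prop) fun s hs => ⟨hs, hDC hp⟩

/-! ### The energy estimate at a fixed time -/

section FixedTime

variable {n : ℕ}

/-- Alikhanov's inequality for the Dirichlet energy,
`½ D^α ‖∇V‖² ≤ -(ΔV, D^α V)`, at a time where the singular integrals converge absolutely.
Only `∂_t V` and the absolute continuity of the energy enter: with `V(s)` frozen,
`‖∇V(s) - ∇V(r)‖²` is an absolutely continuous function of `r`. -/
lemma half_caputo_energy_le {α T s : ℝ} (hα : 0 < α) (hα1 : α < 1) (hs : 0 < s) (hsT : s ≤ T)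
    {G : Set (Fin n → ℝ)} {K : Set ((Fin n → ℝ) × ℝ)} (hK : IsCompact K)
    (hKD : K ⊆ G ×ˢ Set.Ioo 0 π)
    {V Vt : ℝ → (Fin n → ℝ) × ℝ → ℝ}
    (hV : ∀ r ∈ Set.Icc 0 T, ContDiff ℝ 2 (V r))
    (h0 : ∀ r ∈ Set.Icc 0 T, ∀ p ∉ K, V r p = 0)
    (hint : Integrable (fun q : ℝ × ((Fin n → ℝ) × ℝ) => Vt q.1 q.2)
      ((volume.restrict (Set.Ioc 0 T)).prod (volume.restrict (G ×ˢ Set.Ioo 0 π))))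
    (hc : ∀ᵐ p ∂(volume.restrict (G ×ˢ Set.Ioo (0:ℝ) π)),
      ContinuousOn (fun τ => V τ p) (Set.Icc 0 T))
    (hd : ∀ᵐ p ∂(volume.restrict (G ×ˢ Set.Ioo (0:ℝ) π)),
      ∀ τ ∈ Set.Ioc 0 T, HasDerivAt (fun τ => V τ p) (Vt τ p) τ)
    (hwt : Integrable (fun q : ℝ × ((Fin n → ℝ) × ℝ) => (s - q.1) ^ (-α) * Vt q.1 q.2)
      ((volume.restrict (Set.Ioo 0 s)).prod (volume.restrict (G ×ˢ Set.Ioo 0 π))))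
    {w : ℝ → ℝ} (hw : IntegrableOn w (Set.Ioo 0 s))
    (hww : IntegrableOn (fun τ => (s - τ) ^ (-α) * w τ) (Set.Ioo 0 s))
    (hE : ∀ r ∈ Set.Ico 0 s, (∫ p, gradDot (V s) (V s) p) - (∫ p, gradDot (V r) (V r) p)
      = ∫ τ in r..s, w τ) :
    (1 / 2) * caputo α w s
      ≤ - ∫ p in G ×ˢ Set.Ioo 0 π, lap (V s) p * caputo α (fun τ => Vt τ p) s := by
  have hsm : s ∈ Set.Icc 0 T := ⟨hs.le, hsT⟩
  have hsupp : ∀ r ∈ Set.Icc 0 T, HasCompactSupport (V r) := fun r hr =>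
    HasCompactSupport.intro hK (h0 r hr)
  have hlc := continuous_lap (hV s hsm)
  obtain ⟨c, hcb⟩ := (hasCompactSupport_lap (hsupp s hsm)).exists_bound_of_continuous hlc
  have hlm : AEStronglyMeasurable (lap (V s)) (volume.restrict (G ×ˢ Set.Ioo (0:ℝ) π)) :=
    hlc.aestronglyMeasurable
  have hVi : ∀ r ∈ Set.Icc 0 T, Integrable (fun p => lap (V s) p * V r p) := fun r hr =>
    (hlc.mul (hV r hr).continuous).integrable_of_hasCompactSupport (hsupp r hr).mul_left
  have hset : ∀ r ∈ Set.Icc 0 T,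
      ∫ p in G ×ˢ Set.Ioo (0:ℝ) π, lap (V s) p * V r p = ∫ p, lap (V s) p * V r p := fun r hr =>
    setIntegral_eq_integral_of_forall_compl_eq_zero fun p hp => by
      rw [h0 r hr p fun h => hp (hKD h), mul_zero]
  obtain ⟨-, hmw, hcap⟩ := integral_mul_caputo hs.le hlm hcb hwt
  set m : ℝ → ℝ := fun τ => ∫ p in G ×ˢ Set.Ioo (0:ℝ) π, lap (V s) p * Vt τ p with hm
  have hmi : IntegrableOn m (Set.Ioo 0 s) :=
    (show IntegrableOn m (Set.Ioc 0 T) volume from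
      (bdd_mul_time_integrable hlm hcb hint).integral_prod_left).mono_set fun τ hτ => ⟨hτ.1, hτ.2.le.trans hsT⟩
  have hq : IntegrableOn (fun τ => -2 * m τ - w τ) (Set.Ioo 0 s) := (hmi.const_mul (-2)).sub hw
  have hqw : IntegrableOn (fun τ => (s - τ) ^ (-α) * (-2 * m τ - w τ)) (Set.Ioo 0 s) := by
    refine ((hmw.const_mul (-2)).sub hww).congr (Filter.Eventually.of_forall fun τ => ?_)
    simp only [Pi.sub_apply]
    ring
  have htail : ∀ r ∈ Set.Ico 0 s, 0 ≤ ∫ τ in r..s, (-2 * m τ - w τ) := by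
    intro r hr
    have hrT : r ∈ Set.Icc 0 T := ⟨hr.1, hr.2.le.trans hsT⟩
    have hsub : Set.Ioo r s ⊆ Set.Ioo 0 s := Set.Ioo_subset_Ioo_left hr.1
    rw [intervalIntegral.integral_sub
      ((intervalIntegrable_iff_integrableOn_Ioo_of_le hr.2.le).2 ((hmi.mono_set hsub).const_mul _))
      ((intervalIntegrable_iff_integrableOn_Ioo_of_le hr.2.le).2 (hw.mono_set hsub)),
      intervalIntegral.integral_const_mul, ← hE r hr, hm,
      ← pairing_ftc hlm hcb hint hc hd (fun τ hτ => (hVi τ hτ).integrableOn) hr.1 hr.2.le hsT,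
      hset s hsm, hset r hrT]
    have e1 := energy_polarization (hV s hsm) (hV r hrT) (hsupp s hsm) (hsupp r hrT)
    have e2 := integral_gradDot (hV s hsm) (hV s hsm) (hsupp s hsm)
    linarith
  have hpos := weighted_integral_nonneg hα hs hq hqw htail
  rw [hcap, caputo_eq_Ioo hs.le, caputo_eq_Ioo hs.le]
  rw [intervalIntegral.integral_of_le hs.le, integral_Ioc_eq_integral_Ioo] at hpos
  have hsplit : ∫ τ in Set.Ioo 0 s, (s - τ) ^ (-α) * (-2 * m τ - w τ)
      = -2 * (∫ τ in Set.Ioo 0 s, (s - τ) ^ (-α) * m τ)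
        - ∫ τ in Set.Ioo 0 s, (s - τ) ^ (-α) * w τ := by
    rw [← integral_const_mul, ← integral_sub (hmw.const_mul (-2)) hww]
    congr 1; ext τ; ring
  rw [hsplit] at hpos
  have hg : 0 < 1 / Real.Gamma (1 - α) :=
    one_div_pos.2 (Real.Gamma_pos_of_pos (by linarith))
  have := mul_nonneg hg.le hpos
  linarith

lemma integrableOn_prod_of_continuousOn {G : Set (Fin n → ℝ)} (hG : Bornology.IsBounded G)
    {F : (Fin n → ℝ) × ℝ → ℝ} (hF : ContinuousOn F (closure G ×ˢ Set.Icc 0 π)) :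
    IntegrableOn F (G ×ˢ Set.Ioo 0 π) :=
  (hF.integrableOn_compact (hG.isCompact_closure.prod isCompact_Icc)).mono_set
    (Set.prod_mono subset_closure Set.Ioo_subset_Icc_self)

/-- `L²` bound for the source `f h`: since `|f| ≤ (f_M/√π) |(f,ω)|`, the integral over `y` of
`(f h)²` is at most `f_M²` times the squared numerator of `h`, which Cauchy–Schwarz controls. -/
lemma source_estimate {G : Set (Fin n → ℝ)} (hGo : IsOpen G) (hGb : Bornology.IsBounded G)
    {ω ω' : ℝ → ℝ} (hω : ContinuousOn ω (Set.Icc 0 π)) (hω' : ContinuousOn ω' (Set.Icc 0 π))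
    {f_M : ℝ} {f : (Fin n → ℝ) → ℝ → ℝ}
    (hf_ne : ∀ x ∈ closure G, l2ip (f x) ω ≠ 0)
    (hf_bd : ∀ x ∈ closure G, ∀ y ∈ Set.Icc (0:ℝ) π,
      |f x y| ≤ (f_M / Real.sqrt π) * |l2ip (f x) ω|)
    {a : (Fin n → ℝ) → ℝ} (ha : ContinuousOn a (closure G))
    {b d : (Fin n → ℝ) × ℝ → ℝ} (hb : ContinuousOn b (closure G ×ˢ Set.Icc 0 π))
    (hd : ContinuousOn d (closure G ×ˢ Set.Icc 0 π))
    {S : (Fin n → ℝ) × ℝ → ℝ}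
    (hSm : AEStronglyMeasurable S (volume.restrict (G ×ˢ Set.Ioo 0 π)))
    (hS : ∀ x ∈ G, ∀ y ∈ Set.Ioo (0:ℝ) π, S (x, y) = f x y *
      ((a x - l2ip (fun z => b (x, z)) ω + l2ip (fun z => d (x, z)) ω') / l2ip (f x) ω)) :
    IntegrableOn (fun p => S p ^ 2) (G ×ˢ Set.Ioo 0 π) ∧
    ∫ p in G ×ˢ Set.Ioo 0 π, S p ^ 2 ≤ 3 * f_M ^ 2 * ((∫ x in G, a x ^ 2)
      + l2sq ω * (∫ x in G, ∫ y in Set.Ioo (0:ℝ) π, b (x, y) ^ 2)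
      + l2sq ω' * (∫ x in G, ∫ y in Set.Ioo (0:ℝ) π, d (x, y) ^ 2)) := by
  have hD : MeasurableSet (G ×ˢ Set.Ioo (0:ℝ) π) := hGo.measurableSet.prod measurableSet_Ioo
  set B : (Fin n → ℝ) → ℝ := fun x => a x ^ 2
      + l2sq ω * (∫ y in Set.Ioo (0:ℝ) π, b (x, y) ^ 2)
      + l2sq ω' * (∫ y in Set.Ioo (0:ℝ) π, d (x, y) ^ 2) with hB
  have hprod : (volume : Measure ((Fin n → ℝ) × ℝ)).restrict (G ×ˢ Set.Ioo (0:ℝ) π)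
      = (volume.restrict G).prod (volume.restrict (Set.Ioo (0:ℝ) π)) := by
    rw [Measure.volume_eq_prod, Measure.prod_restrict]
  have hai : IntegrableOn (fun x => a x ^ 2) G :=
    ((ha.pow 2).integrableOn_compact hGb.isCompact_closure).mono_set subset_closure
  have hsl : ∀ {e : (Fin n → ℝ) × ℝ → ℝ}, ContinuousOn e (closure G ×ˢ Set.Icc 0 π) →
      IntegrableOn (fun x => ∫ y in Set.Ioo (0:ℝ) π, e (x, y) ^ 2) G := by
    intro e he
    have := integrableOn_prod_of_continuousOn hGb (he.pow 2)
    rw [IntegrableOn, hprod] at this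
    exact this.integral_prod_left
  have hbi := (hsl hb).const_mul (l2sq ω)
  have hdi := (hsl hd).const_mul (l2sq ω')
  have habi : IntegrableOn (fun x => a x ^ 2
      + l2sq ω * (∫ y in Set.Ioo (0:ℝ) π, b (x, y) ^ 2)) G := hai.add hbi
  have hBi : IntegrableOn B G := habi.add hdi
  -- Cauchy–Schwarz in `y` at a fixed `x`
  have hcs : ∀ {e : (Fin n → ℝ) × ℝ → ℝ} {η : ℝ → ℝ},
      ContinuousOn e (closure G ×ˢ Set.Icc 0 π) → ContinuousOn η (Set.Icc 0 π) → ∀ x ∈ G,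
      (l2ip (fun z => e (x, z)) η) ^ 2 ≤ l2sq η * ∫ y in Set.Ioo (0:ℝ) π, e (x, y) ^ 2 := by
    intro e η he hη x hx
    have hex : ContinuousOn (fun z => e (x, z)) (Set.Icc 0 π) :=
      he.comp (by fun_prop) fun z hz => ⟨subset_closure hx, hz⟩
    have hI : ∀ {k : ℝ → ℝ}, ContinuousOn k (Set.Icc 0 π) → IntegrableOn k (Set.Ioo 0 π) :=
      fun hk => (hk.integrableOn_compact isCompact_Icc).mono_set Set.Ioo_subset_Icc_self
    have := sq_integral_mul_le (hI (hex.pow 2)) (hI (hη.pow 2)) (hI (hex.mul hη))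
    rw [l2ip, l2sq, mul_comm (∫ y in Set.Ioo (0:ℝ) π, η y ^ 2)]
    exact this
  have hpt : ∀ p ∈ G ×ˢ Set.Ioo (0:ℝ) π, S p ^ 2 ≤ 3 * f_M ^ 2 / π * B p.1 := by
    rintro ⟨x, y⟩ ⟨hx, hy⟩
    simp only at hx hy
    set N := a x - l2ip (fun z => b (x, z)) ω + l2ip (fun z => d (x, z)) ω' with hN
    have h1 : N ^ 2 ≤ 3 * B x := by
      have c1 := hcs hb hω x hx
      have c2 := hcs hd hω' x hx
      have c3 : N ^ 2 ≤ 3 * (a x ^ 2 + (l2ip (fun z => b (x, z)) ω) ^ 2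
          + (l2ip (fun z => d (x, z)) ω') ^ 2) := by
        rw [hN]
        nlinarith [sq_nonneg (a x + l2ip (fun z => b (x, z)) ω),
          sq_nonneg (a x - l2ip (fun z => d (x, z)) ω'),
          sq_nonneg (l2ip (fun z => b (x, z)) ω + l2ip (fun z => d (x, z)) ω')]
      simp only [hB]
      linarith
    have h2 := hf_bd x (subset_closure hx) y (Set.Ioo_subset_Icc_self hy)
    have h3 : 0 < |l2ip (f x) ω| := abs_pos.2 (hf_ne x (subset_closure hx))
    have h4 : |S (x, y)| ≤ f_M / Real.sqrt π * |N| := by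
      rw [hS x hx y hy, abs_mul, abs_div, ← hN]
      calc |f x y| * (|N| / |l2ip (f x) ω|)
          ≤ (f_M / Real.sqrt π * |l2ip (f x) ω|) * (|N| / |l2ip (f x) ω|) := by gcongr
        _ = f_M / Real.sqrt π * |N| := by field_simp
    calc S (x, y) ^ 2 = |S (x, y)| ^ 2 := (sq_abs _).symm
      _ ≤ (f_M / Real.sqrt π * |N|) ^ 2 := by gcongr
      _ = f_M ^ 2 / π * N ^ 2 := by
        rw [mul_pow, div_pow, Real.sq_sqrt Real.pi_pos.le, sq_abs]
      _ ≤ f_M ^ 2 / π * (3 * B x) := by gcongr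
      _ = 3 * f_M ^ 2 / π * B x := by ring
  have hBp : Integrable (fun p : (Fin n → ℝ) × ℝ => 3 * f_M ^ 2 / π * B p.1)
      (volume.restrict (G ×ˢ Set.Ioo 0 π)) := by
    rw [hprod]
    exact (hBi.comp_fst _).const_mul _
  have hSi : IntegrableOn (fun p => S p ^ 2) (G ×ˢ Set.Ioo 0 π) := by
    refine Integrable.mono' hBp (hSm.pow 2) ?_
    filter_upwards [ae_restrict_mem hD] with p hp
    rw [Real.norm_of_nonneg (sq_nonneg _)]
    exact hpt p hp
  refine ⟨hSi, (setIntegral_mono_on hSi hBp hD hpt).trans_eq ?_⟩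
  have hval : ∫ p in G ×ˢ Set.Ioo (0:ℝ) π, 3 * f_M ^ 2 / π * B p.1
      = 3 * f_M ^ 2 * ∫ x in G, B x := by
    have := setIntegral_prod (μ := volume) (ν := volume)
      (fun p : (Fin n → ℝ) × ℝ => 3 * f_M ^ 2 / π * B p.1) (s := G) (t := Set.Ioo (0:ℝ) π) hBp
    rw [← Measure.volume_eq_prod] at this
    rw [this]
    simp only [setIntegral_const, Real.volume_real_Ioo_of_le Real.pi_pos.le, sub_zero, smul_eq_mul]
    rw [← integral_const_mul]
    congr 1; ext x
    field_simp
  rw [hval]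
  simp only [hB]
  rw [integral_add habi hdi, integral_add hai hbi, integral_const_mul, integral_const_mul]

/-- Testing `C = L + b + S` with `C`, and absorbing `¾ ‖C‖²` by Young's inequality. -/
lemma testing_estimate {X : Type*} [MeasurableSpace X] {ν : Measure X} {C L b S : X → ℝ} {c : ℝ}
    (hC : Integrable C ν) (hLm : AEStronglyMeasurable L ν) (hLb : ∀ p, |L p| ≤ c)
    (hL2 : Integrable (fun p => L p ^ 2) ν) (hb2 : Integrable (fun p => b p ^ 2) ν)
    (hS2 : Integrable (fun p => S p ^ 2) ν) (h : ∀ᵐ p ∂ν, C p = L p + b p + S p) :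
    Integrable (fun p => C p ^ 2) ν ∧
    (1 / 4) * ∫ p, C p ^ 2 ∂ν
      ≤ (∫ p, L p * C p ∂ν) + (1 / 2) * (∫ p, b p ^ 2 ∂ν) + ∫ p, S p ^ 2 ∂ν := by
  have hC2 : Integrable (fun p => C p ^ 2) ν := by
    refine Integrable.mono' (((hL2.add hb2).add hS2).const_mul 3) (hC.1.pow 2) ?_
    filter_upwards [h] with p hp
    rw [Real.norm_of_nonneg (sq_nonneg _), hp]
    simp only [Pi.add_apply]
    nlinarith [sq_nonneg (L p - b p), sq_nonneg (L p - S p), sq_nonneg (b p - S p)]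
  have hLC : Integrable (fun p => L p * C p) ν :=
    hC.bdd_mul (c := c) hLm (Filter.Eventually.of_forall hLb)
  refine ⟨hC2, ?_⟩
  have h1 : Integrable (fun p => L p * C p + (1 / 2) * b p ^ 2) ν := hLC.add (hb2.const_mul _)
  rw [← integral_const_mul, ← integral_const_mul, ← integral_add hLC (hb2.const_mul _),
    ← integral_add h1 hS2]
  refine integral_mono_ae (hC2.const_mul _) (h1.add hS2) ?_
  filter_upwards [h] with p hp
  have : C p ^ 2 = C p * L p + C p * b p + C p * S p := by
    rw [pow_two]; nth_rewrite 2 [hp]; ring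
  nlinarith [sq_nonneg (C p - b p), sq_nonneg (C p - 2 * S p)]

end FixedTime

/-! ### Integration in time -/

lemma rlWeight_integrable {α t : ℝ} (hα : 0 < α) {A : ℝ → ℝ}
    (hA : ContinuousOn A (Set.uIcc 0 t)) :
    IntervalIntegrable (fun s => (t - s) ^ (α - 1) * A s) volume 0 t := by
  have h := (intervalIntegral.intervalIntegrable_rpow' (r := α - 1) (a := 0) (b := t)
    (by linarith)).comp_sub_left t
  simp only [sub_zero, sub_self] at h
  exact h.symm.mul_continuousOn hA

/-- Applying `J^α` to a pointwise inequality `¼ N + ½ D^α W ≤ A + c B`.  If the nonnegative `N`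
has a nonintegrable weighted product, its fractional integral is `0` by convention and the
inequality persists. -/
lemma rlInt_estimate {α t c : ℝ} (hα : 0 < α) (hα1 : α < 1) (ht : 0 ≤ t) {N A B w : ℝ → ℝ}
    (hN : ∀ s, 0 ≤ N s) (hA : ContinuousOn A (Set.Icc 0 t)) (hB : ContinuousOn B (Set.Icc 0 t))
    (hw : IntegrableOn w (Set.Ioc 0 t))
    (h : ∀ᵐ s ∂(volume.restrict (Set.Ioo 0 t)),
      (1 / 4) * N s + (1 / 2) * caputo α w s ≤ A s + c * B s) :
    (1 / 4) * rlInt α N t + (1 / 2) * ∫ s in (0:ℝ)..t, w s ≤ rlInt α A t + c * rlInt α B t := by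
  rw [← Set.uIcc_of_le ht] at hA hB
  have iA := rlWeight_integrable (α := α) hα hA
  have iB := rlWeight_integrable (α := α) hα hB
  have iw := caputo_weighted_integrable ht hα hα1 hw
  rw [← rlInt_caputo ht hα hα1 hw]
  have key : (1 / 4) * (∫ s in (0:ℝ)..t, (t - s) ^ (α - 1) * N s)
      + (1 / 2) * (∫ s in (0:ℝ)..t, (t - s) ^ (α - 1) * caputo α w s)
      ≤ (∫ s in (0:ℝ)..t, (t - s) ^ (α - 1) * A s)
        + c * ∫ s in (0:ℝ)..t, (t - s) ^ (α - 1) * B s := by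
    have iR : IntervalIntegrable (fun s => (t - s) ^ (α - 1) * A s
        + c * ((t - s) ^ (α - 1) * B s)) volume 0 t := iA.add (iB.const_mul c)
    rw [← intervalIntegral.integral_const_mul, ← intervalIntegral.integral_const_mul,
      ← intervalIntegral.integral_const_mul, ← intervalIntegral.integral_add iA (iB.const_mul c)]
    by_cases hi : IntervalIntegrable (fun s => (t - s) ^ (α - 1) * N s) volume 0 t
    · rw [← intervalIntegral.integral_add (hi.const_mul _) (iw.const_mul _)]
      refine intervalIntegral.integral_mono_ae_restrict ht
        ((hi.const_mul _).add (iw.const_mul _)) iR ?_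
      rw [← restrict_Ioo_eq_restrict_Icc]
      filter_upwards [h, ae_restrict_mem measurableSet_Ioo] with s hs hs'
      have hk : 0 ≤ (t - s) ^ (α - 1) := Real.rpow_nonneg (by linarith [hs'.2]) _
      have := mul_le_mul_of_nonneg_left hs hk
      linarith
    · rw [intervalIntegral.integral_const_mul, intervalIntegral.integral_undef hi, mul_zero,
        zero_add]
      refine intervalIntegral.integral_mono_ae_restrict ht (iw.const_mul _) iR ?_
      rw [← restrict_Ioo_eq_restrict_Icc]
      filter_upwards [h, ae_restrict_mem measurableSet_Ioo] with s hs hs'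
      have hk : 0 ≤ (t - s) ^ (α - 1) := Real.rpow_nonneg (by linarith [hs'.2]) _
      have := mul_le_mul_of_nonneg_left hs hk
      have := mul_nonneg hk (hN s)
      linarith
  have hg : 0 ≤ 1 / Real.Gamma α := (one_div_pos.2 (Real.Gamma_pos_of_pos hα)).le
  have := mul_le_mul_of_nonneg_left key hg
  simp only [rlInt]
  linarith

/-- Estimate for the Caputo time derivative of a classical solution `u` of the
nonlinear subdiffusion equation
`D_t^α u - Δ_x u - u_{yy} = g(t,x,y,u) + f(t,x,y) h(t,x)` with `h` given by
the quotient formula, for φ ∈ C¹(closure D): for every `t ∈ (0,T]`,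
`(1/4) J^α(‖D^α u‖²)(t) + (1/2)‖∇_x u(t)‖² + (1/2)‖u_y(t)‖²
  ≤ (1/2)‖∇_x φ‖² + (1/2)‖φ_y‖² + J^α(‖g(·,0)‖² + ℓ₀²‖u‖²)(t)
    + 3 f_M² J^α(‖a‖² + 2‖ω‖²(‖g(·,0)‖² + ℓ₀²‖u‖²) + ‖ω'‖²‖u_y‖²)(t)`. -/
theorem classical_solution_caputo_estimate
    (T α : ℝ) (hT : 0 < T) (hα : 0 < α) (hα1 : α < 1) (n : ℕ) (hn : 1 ≤ n)
    (G : Set (Fin n → ℝ)) (hGopen : IsOpen G) (hGbdd : Bornology.IsBounded G)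
    -- ω ∈ C¹([0,π]) with ω(0) = ω(π) = 0 and ‖ω'‖ > 0
    (ω ω' : ℝ → ℝ)
    (hω_diff : ∀ y ∈ Set.Icc (0:ℝ) π, HasDerivAt ω (ω' y) y)
    (hω'_cont : ContinuousOn ω' (Set.Icc 0 π))
    (hω0 : ω 0 = 0) (hωπ : ω π = 0)
    (hω'_pos : 0 < l2sq ω')
    (f_M ℓ₀ : ℝ) (hfM : 0 < f_M) (hℓ₀ : 0 < ℓ₀)
    -- f continuous, (f(t,x,·),ω) ≠ 0, |f| ≤ (f_M/√π)|(f(t,x,·),ω)|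
    (f : ℝ → (Fin n → ℝ) → ℝ → ℝ)
    (hf_cont : ContinuousOn (fun p : ℝ × (Fin n → ℝ) × ℝ => f p.1 p.2.1 p.2.2)
      (Set.Icc 0 T ×ˢ closure G ×ˢ Set.Icc 0 π))
    (hf_ne : ∀ t ∈ Set.Icc (0:ℝ) T, ∀ x ∈ closure G, l2ip (f t x) ω ≠ 0)
    (hf_bd : ∀ t ∈ Set.Icc (0:ℝ) T, ∀ x ∈ closure G, ∀ y ∈ Set.Icc (0:ℝ) π,
      |f t x y| ≤ (f_M / Real.sqrt π) * |l2ip (f t x) ω|)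
    -- g continuous and ℓ₀-Lipschitz in the last variable
    (g : ℝ → (Fin n → ℝ) → ℝ → ℝ → ℝ)
    (hg_cont : ∀ u : ℝ, ContinuousOn (fun p : ℝ × (Fin n → ℝ) × ℝ => g p.1 p.2.1 p.2.2 u)
      (Set.Icc 0 T ×ˢ closure G ×ˢ Set.Icc 0 π))
    (hg_lip : ∀ t ∈ Set.Icc (0:ℝ) T, ∀ x ∈ closure G, ∀ y ∈ Set.Icc (0:ℝ) π,
      ∀ u v : ℝ, |g t x y u - g t x y v| ≤ ℓ₀ * |u - v|)
    -- a continuous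
    (a : ℝ → (Fin n → ℝ) → ℝ)
    (ha_cont : ContinuousOn (fun p : ℝ × (Fin n → ℝ) => a p.1 p.2)
      (Set.Icc 0 T ×ˢ closure G))
    -- the classical solution u with time derivative ut and initial datum φ
    (u ut : ℝ → (Fin n → ℝ) → ℝ → ℝ) (φ : (Fin n → ℝ) → ℝ → ℝ)
    (hφ_C1 : ContDiffOn ℝ 1 (fun p : (Fin n → ℝ) × ℝ => φ p.1 p.2)
      (closure G ×ˢ Set.Icc 0 π))
    (hu_bdd : ∃ C : ℝ, ∀ t ∈ Set.Icc (0:ℝ) T, ∀ x ∈ closure G,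
      ∀ y ∈ Set.Icc (0:ℝ) π, |u t x y| ≤ C)
    (hu_cont : ContinuousOn (fun p : ℝ × (Fin n → ℝ) × ℝ => u p.1 p.2.1 p.2.2)
      (Set.Icc 0 T ×ˢ closure G ×ˢ Set.Icc 0 π))
    (hu_space : ∀ t ∈ Set.Icc (0:ℝ) T,
      ContDiffOn ℝ 2 (fun p : (Fin n → ℝ) × ℝ => u t p.1 p.2)
        (closure G ×ˢ Set.Icc 0 π))
    -- homogeneous Dirichlet boundary conditions via compact support in D
    (hu_supp : ∃ K : Set ((Fin n → ℝ) × ℝ), IsCompact K ∧ K ⊆ G ×ˢ Set.Ioo 0 π ∧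
      ∀ t ∈ Set.Icc (0:ℝ) T, ∀ p : (Fin n → ℝ) × ℝ, p ∉ K → u t p.1 p.2 = 0)
    -- differentiability in time on (0,T], continuity and integrability of ∂ₜu
    (hu_t : ∀ t ∈ Set.Ioc (0:ℝ) T, ∀ x ∈ closure G, ∀ y ∈ Set.Icc (0:ℝ) π,
      HasDerivAt (fun s => u s x y) (ut t x y) t)
    (hut_cont : ∀ x ∈ closure G, ∀ y ∈ Set.Icc (0:ℝ) π,
      ContinuousOn (fun s => ut s x y) (Set.Ioc 0 T))
    (hut_int : IntegrableOn (fun q : ℝ × ((Fin n → ℝ) × ℝ) => ut q.1 q.2.1 q.2.2)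
      (Set.Ioc 0 T ×ˢ G ×ˢ Set.Ioo 0 π))
    -- initial condition
    (hu0 : ∀ x y, u 0 x y = φ x y)
    -- the equation D_t^α u - Δ_x u - u_{yy} = g(t,x,y,u) + f(t,x,y) h(t,x)
    (hPDE : ∀ t ∈ Set.Ioc (0:ℝ) T, ∀ x ∈ G, ∀ y ∈ Set.Ioo (0:ℝ) π,
      caputo α (fun s => ut s x y) t
        - (∑ i, iteratedDeriv 2 (fun s => u t (Function.update x i s) y) (x i))
        - iteratedDeriv 2 (u t x) y
      = g t x y (u t x y)
        + f t x y *
          ((a t x - l2ip (fun z => g t x z (u t x z)) ω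
              + l2ip (fun z => deriv (u t x) z) ω') / l2ip (f t x) ω))
    -- ∂ₜ∇ₓu and ∂ₜu_y exist and are integrable over (0,T) × D
    (utx : ℝ → (Fin n → ℝ) → ℝ → Fin n → ℝ) (uty : ℝ → (Fin n → ℝ) → ℝ → ℝ)
    (hutx : ∀ t ∈ Set.Ioc (0:ℝ) T, ∀ x ∈ G, ∀ y ∈ Set.Ioo (0:ℝ) π, ∀ i : Fin n,
      HasDerivAt (fun s => deriv (fun r => u s (Function.update x i r) y) (x i))
        (utx t x y i) t)
    (huty : ∀ t ∈ Set.Ioc (0:ℝ) T, ∀ x ∈ G, ∀ y ∈ Set.Ioo (0:ℝ) π,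
      HasDerivAt (fun s => deriv (u s x) y) (uty t x y) t)
    (hutx_int : ∀ i : Fin n,
      IntegrableOn (fun q : ℝ × ((Fin n → ℝ) × ℝ) => utx q.1 q.2.1 q.2.2 i)
        (Set.Ioc 0 T ×ˢ G ×ˢ Set.Ioo 0 π))
    (huty_int : IntegrableOn (fun q : ℝ × ((Fin n → ℝ) × ℝ) => uty q.1 q.2.1 q.2.2)
      (Set.Ioc 0 T ×ˢ G ×ˢ Set.Ioo 0 π))
    -- t ↦ ‖∇ₓu(t)‖² and t ↦ ‖u_y(t)‖² are absolutely continuous on [0,T]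
    (P' Q' : ℝ → ℝ) (hP'_int : IntegrableOn P' (Set.Ioo 0 T))
    (hQ'_int : IntegrableOn Q' (Set.Ioo 0 T))
    (hP_AC : ∀ t ∈ Set.Icc (0:ℝ) T,
      (∫ x in G, ∫ y in Set.Ioo (0:ℝ) π,
          ∑ i, (deriv (fun r => u t (Function.update x i r) y) (x i)) ^ 2)
        = (∫ x in G, ∫ y in Set.Ioo (0:ℝ) π,
            ∑ i, (deriv (fun r => u 0 (Function.update x i r) y) (x i)) ^ 2)
          + ∫ s in (0:ℝ)..t, P' s)
    (hQ_AC : ∀ t ∈ Set.Icc (0:ℝ) T,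
      (∫ x in G, ∫ y in Set.Ioo (0:ℝ) π, (deriv (u t x) y) ^ 2)
        = (∫ x in G, ∫ y in Set.Ioo (0:ℝ) π, (deriv (u 0 x) y) ^ 2)
          + ∫ s in (0:ℝ)..t, Q' s) :
    ∀ t ∈ Set.Ioc (0:ℝ) T,
      (1 / 4) * rlInt α (fun s => ∫ x in G, ∫ y in Set.Ioo (0:ℝ) π,
            (caputo α (fun τ => ut τ x y) s) ^ 2) t
        + (1 / 2) * (∫ x in G, ∫ y in Set.Ioo (0:ℝ) π,
            ∑ i, (deriv (fun r => u t (Function.update x i r) y) (x i)) ^ 2)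
        + (1 / 2) * (∫ x in G, ∫ y in Set.Ioo (0:ℝ) π, (deriv (u t x) y) ^ 2)
      ≤ (1 / 2) * (∫ x in G, ∫ y in Set.Ioo (0:ℝ) π,
            ∑ i, (deriv (fun r => φ (Function.update x i r) y) (x i)) ^ 2)
        + (1 / 2) * (∫ x in G, ∫ y in Set.Ioo (0:ℝ) π, (deriv (φ x) y) ^ 2)
        + rlInt α (fun s =>
            (∫ x in G, ∫ y in Set.Ioo (0:ℝ) π, (g s x y 0) ^ 2)
              + ℓ₀ ^ 2 * ∫ x in G, ∫ y in Set.Ioo (0:ℝ) π, (u s x y) ^ 2) t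
        + 3 * f_M ^ 2 * rlInt α (fun s =>
            (∫ x in G, (a s x) ^ 2)
              + 2 * l2sq ω *
                ((∫ x in G, ∫ y in Set.Ioo (0:ℝ) π, (g s x y 0) ^ 2)
                  + ℓ₀ ^ 2 * ∫ x in G, ∫ y in Set.Ioo (0:ℝ) π, (u s x y) ^ 2)
              + l2sq ω' *
                  ∫ x in G, ∫ y in Set.Ioo (0:ℝ) π, (deriv (u s x) y) ^ 2) t := by
  obtain ⟨K, hK, hKD, hsupp⟩ := hu_supp
  intro t ht
  have hD : MeasurableSet (G ×ˢ Set.Ioo (0:ℝ) π) :=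
    hGopen.measurableSet.prod measurableSet_Ioo
  have hC : IsCompact (closure G ×ˢ Set.Icc (0:ℝ) π) :=
    hGbdd.isCompact_closure.prod isCompact_Icc
  have hDC : G ×ˢ Set.Ioo (0:ℝ) π ⊆ closure G ×ˢ Set.Icc (0:ℝ) π :=
    Set.prod_mono subset_closure Set.Ioo_subset_Icc_self
  have hω_cont : ContinuousOn ω (Set.Icc 0 π) := fun y hy =>
    (hω_diff y hy).continuousAt.continuousWithinAt
  set V : ℝ → (Fin n → ℝ) × ℝ → ℝ := fun s p => u s p.1 p.2 with hVdef
  set Vt : ℝ → (Fin n → ℝ) × ℝ → ℝ := fun s p => ut s p.1 p.2 with hVtdef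
  have hV : ∀ s ∈ Set.Icc 0 T, ContDiff ℝ 2 (V s) := fun s hs =>
    contDiff_of_compact_support hGopen hK hKD (hu_space s hs) (hsupp s hs)
  have hV0 : ∀ s ∈ Set.Icc 0 T, ∀ p ∉ K, V s p = 0 := hsupp
  have hVt : Integrable (fun q : ℝ × ((Fin n → ℝ) × ℝ) => Vt q.1 q.2)
      ((volume.restrict (Set.Ioc 0 T)).prod (volume.restrict (G ×ˢ Set.Ioo 0 π))) := by
    rw [Measure.prod_restrict, ← Measure.volume_eq_prod]
    exact hut_int
  have hiter : ∀ {F : (Fin n → ℝ) × ℝ → ℝ}, IntegrableOn F (G ×ˢ Set.Ioo 0 π) →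
      ∫ x in G, ∫ y in Set.Ioo (0:ℝ) π, F (x, y) = ∫ p in G ×ˢ Set.Ioo (0:ℝ) π, F p :=
    fun {F} hF => (setIntegral_prod (μ := volume) (ν := volume) F hF).symm
  -- the total Dirichlet energy is absolutely continuous with derivative `P' + Q'`
  set w : ℝ → ℝ := fun s => P' s + Q' s with hwdef
  have hP'i : IntegrableOn P' (Set.Ioc 0 T) := (integrableOn_Ioc_iff_integrableOn_Ioo).2 hP'_int
  have hQ'i : IntegrableOn Q' (Set.Ioc 0 T) := (integrableOn_Ioc_iff_integrableOn_Ioo).2 hQ'_int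
  have hwT : IntegrableOn w (Set.Ioc 0 T) := hP'i.add hQ'i
  have hintv : ∀ {k : ℝ → ℝ}, IntegrableOn k (Set.Ioc 0 T) → ∀ s ∈ Set.Icc 0 T,
      IntervalIntegrable k volume 0 s := fun hk s hs =>
    (intervalIntegrable_iff_integrableOn_Ioc_of_le hs.1).2
      (hk.mono_set (Set.Ioc_subset_Ioc_right hs.2))
  have hEn : ∀ s ∈ Set.Icc 0 T, ∫ p, gradDot (V s) (V s) p
      = (∫ p, gradDot (V 0) (V 0) p) + ∫ τ in (0:ℝ)..s, w τ := by
    intro s hs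
    have h0m : (0:ℝ) ∈ Set.Icc 0 T := ⟨le_rfl, hT.le⟩
    rw [← energy_eq hK hKD (hV s hs) (hV0 s hs), ← energy_eq hK hKD (hV 0 h0m) (hV0 0 h0m),
      intervalIntegral.integral_add (hintv hP'i s hs) (hintv hQ'i s hs)]
    have h1 := hP_AC s hs
    have h2 := hQ_AC s hs
    simp only [hVdef]
    linarith
  have hEd : ∀ s ∈ Set.Icc 0 T, ∀ r ∈ Set.Ico 0 s,
      (∫ p, gradDot (V s) (V s) p) - (∫ p, gradDot (V r) (V r) p) = ∫ τ in r..s, w τ := by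
    intro s hs r hr
    have hrT : r ∈ Set.Icc 0 T := ⟨hr.1, hr.2.le.trans hs.2⟩
    rw [hEn s hs, hEn r hrT, ← intervalIntegral.integral_interval_sub_left (hintv hwT s hs)
      (hintv hwT r hrT)]
    ring
  have hgu : ∀ s ∈ Set.Icc 0 T, ContinuousOn (fun p : (Fin n → ℝ) × ℝ => g s p.1 p.2 (V s p))
      (closure G ×ˢ Set.Icc 0 π) := by
    intro s hs
    have hj : ContinuousOn (fun q : ((Fin n → ℝ) × ℝ) × ℝ => g s q.1.1 q.1.2 q.2)
        ((closure G ×ˢ Set.Icc 0 π) ×ˢ Set.univ) := by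
      refine continuousOn_prod_of_continuousOn_lipschitzOnWith' _ (Real.toNNReal ℓ₀) ?_ ?_
      · intro p hp
        refine LipschitzOnWith.of_dist_le_mul fun v _ v' _ => ?_
        rw [Real.dist_eq, Real.dist_eq, Real.coe_toNNReal _ hℓ₀.le]
        exact hg_lip s hs p.1 hp.1 p.2 hp.2 v v'
      · intro v _
        exact (hg_cont v).comp (f := fun p : (Fin n → ℝ) × ℝ => (s, p)) (by fun_prop)
          fun p hp => ⟨hs, hp⟩
    exact hj.comp (f := fun p => (p, V s p)) (continuousOn_id.prodMk (hV s hs).continuous.continuousOn)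
      fun p hp => ⟨hp, Set.mem_univ _⟩
  have hg0 : ∀ s ∈ Set.Icc 0 T, ContinuousOn (fun p : (Fin n → ℝ) × ℝ => g s p.1 p.2 0)
      (closure G ×ˢ Set.Icc 0 π) := fun s hs =>
    (hg_cont 0).comp (f := fun p : (Fin n → ℝ) × ℝ => (s, p)) (by fun_prop) fun p hp => ⟨hs, hp⟩
  -- continuity in time of the data norms
  have hcg : ContinuousOn (fun s => ∫ x in G, ∫ y in Set.Ioo (0:ℝ) π, (g s x y 0) ^ 2)
      (Set.Icc 0 T) := by
    refine (continuousOn_integral_param (μ := volume) isCompact_Icc hC hD hDC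
      (F := fun s p => (g s p.1 p.2 0) ^ 2) ((hg_cont 0).pow 2)).congr fun s hs => ?_
    exact hiter (integrableOn_prod_of_continuousOn hGbdd ((hg0 s hs).pow 2))
  have hcu : ContinuousOn (fun s => ∫ x in G, ∫ y in Set.Ioo (0:ℝ) π, (u s x y) ^ 2)
      (Set.Icc 0 T) := by
    refine (continuousOn_integral_param (μ := volume) isCompact_Icc hC hD hDC
      (F := fun s p => (u s p.1 p.2) ^ 2) (hu_cont.pow 2)).congr fun s hs => ?_
    exact hiter (integrableOn_prod_of_continuousOn hGbdd ((hV s hs).continuous.continuousOn.pow 2))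
  have hca : ContinuousOn (fun s => ∫ x in G, (a s x) ^ 2) (Set.Icc 0 T) :=
    continuousOn_integral_param (μ := volume) isCompact_Icc hGbdd.isCompact_closure
      hGopen.measurableSet subset_closure (F := fun s x => (a s x) ^ 2) (ha_cont.pow 2)
  have hcq : ContinuousOn (fun s => ∫ x in G, ∫ y in Set.Ioo (0:ℝ) π, (deriv (u s x) y) ^ 2)
      (Set.Icc 0 T) := by
    refine ContinuousOn.congr (continuousOn_const.add ?_) hQ_AC
    have := intervalIntegral.continuousOn_primitive_interval (μ := volume) (f := Q') (a := 0)
      (b := T) (by rw [Set.uIcc_of_le hT.le, integrableOn_Icc_iff_integrableOn_Ioc]; exact hQ'i)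
    rwa [Set.uIcc_of_le hT.le] at this
  have htT : Set.Icc 0 t ⊆ Set.Icc 0 T := Set.Icc_subset_Icc_right ht.2
  have hwt : IntegrableOn w (Set.Ioc 0 t) := hwT.mono_set (Set.Ioc_subset_Ioc_right ht.2)
  have hUt : IntegrableOn (fun τ => ∫ p in G ×ˢ Set.Ioo (0:ℝ) π, ‖Vt τ p‖) (Set.Ioc 0 t) :=
    IntegrableOn.mono_set (show IntegrableOn _ (Set.Ioc 0 T) volume from
      hVt.norm.integral_prod_left) (Set.Ioc_subset_Ioc_right ht.2)
  have hmain : ∀ᵐ s ∂(volume.restrict (Set.Ioo 0 t)),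
      (1 / 4) * (∫ x in G, ∫ y in Set.Ioo (0:ℝ) π, (caputo α (fun τ => ut τ x y) s) ^ 2)
        + (1 / 2) * caputo α w s
      ≤ ((∫ x in G, ∫ y in Set.Ioo (0:ℝ) π, (g s x y 0) ^ 2)
            + ℓ₀ ^ 2 * ∫ x in G, ∫ y in Set.Ioo (0:ℝ) π, (u s x y) ^ 2)
        + 3 * f_M ^ 2 * ((∫ x in G, (a s x) ^ 2)
            + 2 * l2sq ω * ((∫ x in G, ∫ y in Set.Ioo (0:ℝ) π, (g s x y 0) ^ 2)
              + ℓ₀ ^ 2 * ∫ x in G, ∫ y in Set.Ioo (0:ℝ) π, (u s x y) ^ 2)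
            + l2sq ω' * ∫ x in G, ∫ y in Set.Ioo (0:ℝ) π, (deriv (u s x) y) ^ 2) := by
    filter_upwards [ae_integrable_caputo hα hα1 hwt, ae_integrable_caputo hα hα1 hUt,
      ae_restrict_mem measurableSet_Ioo] with s hsw hsU hst
    have hsT : s ≤ T := hst.2.le.trans ht.2
    have hs : s ∈ Set.Icc 0 T := ⟨hst.1.le, hsT⟩
    have hsc : s ∈ Set.Ioc 0 T := ⟨hst.1, hsT⟩
    have hsub : Set.Ioo 0 s ⊆ Set.Ioc 0 T := fun τ hτ => ⟨hτ.1, hτ.2.le.trans hsT⟩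
    have hVts : Integrable (fun q : ℝ × ((Fin n → ℝ) × ℝ) => Vt q.1 q.2)
        ((volume.restrict (Set.Ioo 0 s)).prod (volume.restrict (G ×ˢ Set.Ioo 0 π))) :=
      hVt.mono_measure (Measure.prod_mono (Measure.restrict_mono hsub le_rfl) le_rfl)
    have hwtd := weighted_time_integrable hVts hsU
    have hen := half_caputo_energy_le hα hα1 hst.1 hsT hK hKD hV hV0 hVt
      (by
        filter_upwards [ae_restrict_mem hD] with p hp
        exact hu_cont.comp (f := fun τ => (τ, p)) (by fun_prop) fun τ hτ => ⟨hτ, hDC hp⟩)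
      (by
        filter_upwards [ae_restrict_mem hD] with p hp τ hτ
        exact hu_t τ hτ p.1 (hDC hp).1 p.2 (hDC hp).2)
      hwtd (hwt.mono_set fun τ hτ => ⟨hτ.1, hτ.2.le.trans hst.2.le⟩) hsw (hEd s hs)
    have hlc := continuous_lap (hV s hs)
    obtain ⟨c, hcb⟩ := (hasCompactSupport_lap
      (HasCompactSupport.intro hK (hV0 s hs))).exists_bound_of_continuous hlc
    obtain ⟨hCi, -, -⟩ := integral_mul_caputo hst.1.le hlc.aestronglyMeasurable hcb hwtd
    -- the source `f h`, which the equation expresses through measurable quantities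
    set S : (Fin n → ℝ) × ℝ → ℝ := fun p =>
      caputo α (fun τ => Vt τ p) s - lap (V s) p - g s p.1 p.2 (V s p) with hS
    have hguD : ContinuousOn (fun p : (Fin n → ℝ) × ℝ => g s p.1 p.2 (V s p))
      (G ×ˢ Set.Ioo 0 π) := (hgu s hs).mono hDC
    have hSm : AEStronglyMeasurable S (volume.restrict (G ×ˢ Set.Ioo 0 π)) :=
      (hCi.1.sub hlc.aestronglyMeasurable).sub (hguD.aestronglyMeasurable hD)
    have hdY : Continuous (fun p => fderiv ℝ (V s) p dirY) := (contDiff_dir (hV s hs) dirY).continuous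
    have hdy : ∀ x y, deriv (u s x) y = fderiv ℝ (V s) (x, y) dirY := fun x y =>
      deriv_snd ((hV s hs).differentiable (by norm_num)) x y
    have hSeq : ∀ x ∈ G, ∀ y ∈ Set.Ioo (0:ℝ) π, S (x, y) = f s x y *
        ((a s x - l2ip (fun z => g s x z (V s (x, z))) ω
          + l2ip (fun z => fderiv ℝ (V s) (x, z) dirY) ω') / l2ip (f s x) ω) := by
      intro x hx y hy
      have h1 := hPDE s hsc x hx y hy
      have h2 : ∀ i, iteratedDeriv 2 (fun r => u s (Function.update x i r) y) (x i)
          = fderiv ℝ (fun q => fderiv ℝ (V s) q (dirX i)) (x, y) (dirX i) := fun i =>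
        iteratedDeriv_update (hV s hs) x y i
      have h3 : iteratedDeriv 2 (u s x) y
          = fderiv ℝ (fun q => fderiv ℝ (V s) q dirY) (x, y) dirY :=
        iteratedDeriv_snd (hV s hs) x y
      simp only [h2, h3, hdy] at h1
      simp only [hS, lap, hVdef, hVtdef] at h1 ⊢
      linarith
    obtain ⟨hS2, hSle⟩ := source_estimate hGopen hGbdd hω_cont hω'_cont (f_M := f_M)
      (hf_ne s hs) (hf_bd s hs) (a := a s)
      (ha_cont.comp (f := fun x => (s, x)) (by fun_prop) fun x hx => ⟨hs, hx⟩)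
      (b := fun p => g s p.1 p.2 (V s p)) (hgu s hs) (d := fun p => fderiv ℝ (V s) p dirY)
      hdY.continuousOn hSm hSeq
    have hb2 : IntegrableOn (fun p : (Fin n → ℝ) × ℝ => (g s p.1 p.2 (V s p)) ^ 2)
        (G ×ˢ Set.Ioo 0 π) := integrableOn_prod_of_continuousOn hGbdd ((hgu s hs).pow 2)
    obtain ⟨hC2, htest⟩ := testing_estimate hCi hlc.aestronglyMeasurable hcb
      (integrableOn_prod_of_continuousOn hGbdd (hlc.continuousOn.pow 2)) hb2 hS2
      (Filter.Eventually.of_forall fun p => by simp only [hS]; ring)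
    have eC : ∫ x in G, ∫ y in Set.Ioo (0:ℝ) π, (caputo α (fun τ => ut τ x y) s) ^ 2
        = ∫ p in G ×ˢ Set.Ioo (0:ℝ) π, (caputo α (fun τ => Vt τ p) s) ^ 2 := hiter hC2
    have hg2 : IntegrableOn (fun p : (Fin n → ℝ) × ℝ => (g s p.1 p.2 0) ^ 2)
        (G ×ˢ Set.Ioo 0 π) := integrableOn_prod_of_continuousOn hGbdd ((hg0 s hs).pow 2)
    have hu2 : IntegrableOn (fun p => (V s p) ^ 2) (G ×ˢ Set.Ioo 0 π) := integrableOn_prod_of_continuousOn hGbdd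
      ((hV s hs).continuous.continuousOn (s := closure G ×ˢ Set.Icc 0 π) |>.pow 2)
    have eg : ∫ x in G, ∫ y in Set.Ioo (0:ℝ) π, (g s x y 0) ^ 2
        = ∫ p in G ×ˢ Set.Ioo (0:ℝ) π, (g s p.1 p.2 0) ^ 2 := hiter hg2
    have eu : ∫ x in G, ∫ y in Set.Ioo (0:ℝ) π, (u s x y) ^ 2
        = ∫ p in G ×ˢ Set.Ioo (0:ℝ) π, (V s p) ^ 2 := hiter hu2
    have eb : ∫ x in G, ∫ y in Set.Ioo (0:ℝ) π, (g s x y (V s (x, y))) ^ 2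
        = ∫ p in G ×ˢ Set.Ioo (0:ℝ) π, (g s p.1 p.2 (V s p)) ^ 2 := hiter hb2
    have hble : ∫ p in G ×ˢ Set.Ioo (0:ℝ) π, (g s p.1 p.2 (V s p)) ^ 2
        ≤ 2 * ((∫ p in G ×ˢ Set.Ioo (0:ℝ) π, (g s p.1 p.2 0) ^ 2)
          + ℓ₀ ^ 2 * ∫ p in G ×ˢ Set.Ioo (0:ℝ) π, (V s p) ^ 2) := by
      rw [← integral_const_mul, ← integral_add hg2 (hu2.const_mul _), ← integral_const_mul]
      refine setIntegral_mono_on hb2 ((hg2.add (hu2.const_mul _)).const_mul 2) hD fun p hp => ?_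
      have h1 := hg_lip s hs p.1 (hDC hp).1 p.2 (hDC hp).2 (V s p) 0
      rw [sub_zero] at h1
      have h2 : (g s p.1 p.2 (V s p) - g s p.1 p.2 0) ^ 2 ≤ (ℓ₀ * |V s p|) ^ 2 := by
        rw [← sq_abs]; gcongr
      rw [mul_pow, sq_abs] at h2
      nlinarith [sq_nonneg (g s p.1 p.2 (V s p) - 2 * g s p.1 p.2 0)]
    simp only [hdy]
    rw [eC, eg, eu]
    rw [eb] at hSle
    have hω2 : 0 ≤ l2sq ω := integral_nonneg fun y => sq_nonneg _
    have h5 := mul_le_mul_of_nonneg_left hble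
      (mul_nonneg (mul_nonneg (by norm_num : (0:ℝ) ≤ 3) (sq_nonneg f_M)) hω2)
    linarith
  have hfin := rlInt_estimate hα hα1 ht.1.le (c := 3 * f_M ^ 2)
    (N := fun s => ∫ x in G, ∫ y in Set.Ioo (0:ℝ) π, (caputo α (fun τ => ut τ x y) s) ^ 2)
    (fun s => integral_nonneg fun x => integral_nonneg fun y => sq_nonneg _)
    (A := fun s => (∫ x in G, ∫ y in Set.Ioo (0:ℝ) π, (g s x y 0) ^ 2)
      + ℓ₀ ^ 2 * ∫ x in G, ∫ y in Set.Ioo (0:ℝ) π, (u s x y) ^ 2)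
    (B := fun s => (∫ x in G, (a s x) ^ 2)
      + 2 * l2sq ω * ((∫ x in G, ∫ y in Set.Ioo (0:ℝ) π, (g s x y 0) ^ 2)
        + ℓ₀ ^ 2 * ∫ x in G, ∫ y in Set.Ioo (0:ℝ) π, (u s x y) ^ 2)
      + l2sq ω' * ∫ x in G, ∫ y in Set.Ioo (0:ℝ) π, (deriv (u s x) y) ^ 2)
    ((hcg.add (hcu.const_mul (ℓ₀ ^ 2))).mono htT)
    (((hca.add ((hcg.add (hcu.const_mul (ℓ₀ ^ 2))).const_mul (2 * l2sq ω))).add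
      (hcq.const_mul (l2sq ω'))).mono htT) hwt hmain
  have htm : t ∈ Set.Icc 0 T := ⟨ht.1.le, ht.2⟩
  have h0m : (0:ℝ) ∈ Set.Icc 0 T := ⟨le_rfl, hT.le⟩
  have hEt := hEn t htm
  rw [← energy_eq hK hKD (hV t htm) (hV0 t htm), ← energy_eq hK hKD (hV 0 h0m) (hV0 0 h0m)] at hEt
  have hφ : φ = u 0 := funext fun x => funext fun y => (hu0 x y).symm
  rw [hφ]
  simp only [hVdef] at hEt
  linarith
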